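/- arXiv:1805.07686 — 4 statements merged into one kernel-verified Lean document; each statement's English description precedes it below -/
import Mathlib

section
/- (Lemma 6.4, bounded case, in explicit form.) Fix an integer k ≥ 1. If S is bounded, i.e. there exists B > 0 such that f vanishes almost everywhere on (B,∞), then the paper's k-server SRPT response-time bound is asymptotically tight against the single-server SRPT mean response time in heavy traffic: lim_{λ → (1/m)⁻} (∫₀^∞ H_λ(x)·f(x) dx) / T̄(λ) = 1. -/
open MeasureTheory Filter

/-- Relevant load `ρ_{≤x} = λ ∫₀^x t f(t) dt`. -/
noncomputable def rhoLe (f : ℝ → ℝ) (lam x : ℝ) : ℝ :=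
  lam * ∫ t in (0:ℝ)..x, t * f t

/-- Tail of the service requirement distribution, `F̄(x) = ∫_x^∞ f(t) dt`. -/
noncomputable def tailS (f : ℝ → ℝ) (x : ℝ) : ℝ :=
  ∫ t in Set.Ioi x, f t

/-- Schrage's exact formula `T̄_λ(x)` for the mean response time of a size-`x`
job in an M/G/1 queue under SRPT. -/
noncomputable def Tsrpt1 (f : ℝ → ℝ) (lam x : ℝ) : ℝ :=
  (lam * (∫ t in (0:ℝ)..x, t ^ 2 * f t) + lam * x ^ 2 * tailS f x)
      / (2 * (1 - rhoLe f lam x) ^ 2)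
    + ∫ t in (0:ℝ)..x, 1 / (1 - rhoLe f lam t)

/-- Overall M/G/1 SRPT mean response time `T̄(λ) = ∫₀^∞ T̄_λ(x) f(x) dx`. -/
noncomputable def TsrptMean (f : ℝ → ℝ) (lam : ℝ) : ℝ :=
  ∫ x in Set.Ioi (0:ℝ), Tsrpt1 f lam x * f x

/-- The paper's simple upper bound `H_λ(x)` on the mean response time of a
size-`x` job under `k`-server SRPT. -/
noncomputable def Hbound (f : ℝ → ℝ) (k : ℕ) (lam x : ℝ) : ℝ :=
  (lam * (∫ t in (0:ℝ)..x, t ^ 2 * f t) + lam * x ^ 2 * tailS f x)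
      / (2 * (1 - rhoLe f lam x) ^ 2)
    + 2 * (k : ℝ) * x / (1 - rhoLe f lam x)

set_option maxHeartbeats 4000000 in
/-- **Lemma 6.4, bounded case.** If `S` is bounded, then
`lim_{λ → (1/m)⁻} (∫₀^∞ H_λ(x) f(x) dx) / T̄(λ) = 1`. -/
theorem Hbound_ratio_tendsto_one_bounded
    (f : ℝ → ℝ) (m : ℝ)
    (hf_meas : Measurable f)
    (hf_nonneg : ∀ x, 0 ≤ f x)
    (hf_zero : ∀ x ≤ 0, f x = 0)
    (hf_prob : ∫ t in Set.Ioi (0:ℝ), f t = 1)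
    (hm_int : Integrable (fun t => t * f t) (volume.restrict (Set.Ioi 0)))
    (hm_def : m = ∫ t in Set.Ioi (0:ℝ), t * f t)
    (hm_pos : 0 < m)
    (k : ℕ) (hk : 1 ≤ k)
    (hbounded : ∃ B > (0:ℝ), ∀ᵐ x : ℝ, B < x → f x = 0) :
    Tendsto (fun lam => (∫ x in Set.Ioi (0:ℝ), Hbound f k lam x * f x) / TsrptMean f lam)
      (nhdsWithin (1/m) (Set.Iio (1/m))) (nhds 1) := by
  obtain ⟨B, hB, hfB⟩ := hbounded
  have hF0 : IntegrableOn f (Set.Ioi 0) := by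
    by_contra h
    rw [integral_undef h] at hf_prob
    exact zero_ne_one hf_prob
  have hF : Integrable f := by
    refine (integrableOn_iff_integrable_of_support_subset ?_).1 hF0
    intro x hx
    by_contra h
    exact hx (hf_zero x (not_lt.1 h))
  have hfB' : ∀ᵐ x : ℝ, f x ≠ 0 → 0 < x ∧ x ≤ B := by
    filter_upwards [hfB] with x hx h
    constructor
    · by_contra h0
      exact h (hf_zero x (not_lt.1 h0))
    · by_contra h0
      exact h (hx (not_le.1 h0))
  have hint : ∀ g : ℝ → ℝ, Continuous g → Integrable (fun x => g x * f x) := by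
    intro g hg
    obtain ⟨C, hC⟩ := (isCompact_Icc (a := (0:ℝ)) (b := B)).exists_bound_of_continuousOn
      hg.continuousOn
    refine (hF.const_mul C).mono' (hg.measurable.mul hf_meas).aestronglyMeasurable ?_
    filter_upwards [hfB'] with x hx
    by_cases h : f x = 0
    · simp [h]
    · obtain ⟨h1, h2⟩ := hx h
      rw [norm_mul, Real.norm_of_nonneg (hf_nonneg x)]
      exact mul_le_mul_of_nonneg_right (hC x ⟨h1.le, h2⟩) (hf_nonneg x)
  have h1int : Integrable (fun t => t * f t) := hint _ continuous_id
  have h2int : Integrable (fun t => t ^ 2 * f t) := hint _ (continuous_pow 2)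
  set G : ℝ → ℝ := fun x => ∫ t in (0:ℝ)..x, t * f t with hG
  set Q : ℝ → ℝ := fun x => ∫ t in (0:ℝ)..x, t ^ 2 * f t with hQ
  have hGc : Continuous G :=
    intervalIntegral.continuous_primitive (fun a b => h1int.intervalIntegrable) 0
  have hQc : Continuous Q :=
    intervalIntegral.continuous_primitive (fun a b => h2int.intervalIntegrable) 0
  have htail : ∀ x, G x + ∫ t in Set.Ioi x, t * f t = m := by
    intro x
    rw [hm_def]
    exact intervalIntegral.integral_interval_add_Ioi h1int.integrableOn h1int.integrableOn
  have hFc0 : Continuous (fun x => ∫ t in (0:ℝ)..x, f t) :=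
    intervalIntegral.continuous_primitive (fun a b => hF.intervalIntegrable) 0
  have htailS : ∀ x, (∫ t in (0:ℝ)..x, f t) + tailS f x = 1 := by
    intro x
    rw [← hf_prob]
    exact intervalIntegral.integral_interval_add_Ioi hF.integrableOn hF.integrableOn
  have hFc : Continuous (tailS f) := by
    have : tailS f = fun x => 1 - ∫ t in (0:ℝ)..x, f t := by
      funext x
      linarith [htailS x]
    rw [this]
    exact continuous_const.sub hFc0
  have htail0 : ∀ x, 0 ≤ tailS f x := fun x => integral_nonneg hf_nonneg
  have htf : ∀ t, 0 ≤ t * f t := by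
    intro t
    rcases le_or_gt t 0 with h | h
    · simp [hf_zero t h]
    · exact mul_nonneg h.le (hf_nonneg t)
  have hGle : ∀ x, G x ≤ m := by
    intro x
    have : 0 ≤ ∫ t in Set.Ioi x, t * f t := integral_nonneg htf
    linarith [htail x]
  have hGmono : Monotone G := by
    intro a b hab
    have h1 := htail a
    have h2 := htail b
    have : ∫ t in Set.Ioi b, t * f t ≤ ∫ t in Set.Ioi a, t * f t :=
      setIntegral_mono_set h1int.integrableOn (ae_of_all _ htf)
        (Set.Ioi_subset_Ioi hab).eventuallyLE
    linarith
  have hG0 : G 0 = 0 := by simp [hG]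
  have hGlim : Tendsto G atTop (nhds m) := by
    rw [hm_def]
    exact intervalIntegral_tendsto_integral_Ioi 0 hm_int tendsto_id
  have hGsurj : ∀ c, 0 ≤ c → c < m → ∃ x, G x = c := by
    intro c h0 h1
    exact mem_range_of_exists_le_of_exists_ge hGc ⟨0, by rw [hG0]; exact h0⟩
      (((hGlim.eventually (lt_mem_nhds h1)).exists).imp fun x hx => hx.le)
  obtain ⟨x0, hx0⟩ := hGsurj (m / 2) (by linarith) (by linarith)
  have hx0pos : 0 < x0 := by
    by_contra h
    have := hGmono (not_lt.1 h)
    rw [hx0, hG0] at this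
    linarith
  -- lower bound on the truncated second moment
  have hQlow : ∀ x, x0 ≤ x → m ^ 2 / 4 ≤ Q x := by
    intro x hx
    have hxp : 0 ≤ x := hx0pos.le.trans hx
    have h1 : ∫ t in (0:ℝ)..x, (m * (t * f t) - m ^ 2 / 4 * f t) ≤ Q x := by
      refine intervalIntegral.integral_mono_on hxp
        ((h1int.const_mul m).sub (hF.const_mul _)).intervalIntegrable
        h2int.intervalIntegrable ?_
      intro t ht
      nlinarith [mul_nonneg (sq_nonneg (t - m / 2)) (hf_nonneg t)]
    rw [intervalIntegral.integral_sub (h1int.const_mul m).intervalIntegrable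
      (hF.const_mul _).intervalIntegrable, intervalIntegral.integral_const_mul,
      intervalIntegral.integral_const_mul] at h1
    have h2 : m / 2 ≤ G x := hx0 ▸ hGmono hx
    have h3 : ∫ t in (0:ℝ)..x, f t ≤ 1 := by linarith [htailS x, htail0 x]
    have h4 : m * G x - m ^ 2 / 4 * (∫ t in (0:ℝ)..x, f t) ≤ Q x := h1
    have h5 : m * (m / 2) ≤ m * G x := mul_le_mul_of_nonneg_left h2 hm_pos.le
    have h6 : m ^ 2 / 4 * (∫ t in (0:ℝ)..x, f t) ≤ m ^ 2 / 4 * 1 :=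
      mul_le_mul_of_nonneg_left h3 (by positivity)
    linarith
  have hQ0 : ∀ x, 0 ≤ x → 0 ≤ Q x := by
    intro x hx
    exact intervalIntegral.integral_nonneg hx
      fun t _ => mul_nonneg (sq_nonneg t) (hf_nonneg t)
  -- the components
  set D : ℝ → ℝ → ℝ := fun lam x => 1 - rhoLe f lam x with hD
  have hDdef : ∀ lam x, D lam x = 1 - lam * G x := fun _ _ => rfl
  set w : ℝ → ℝ → ℝ := fun lam x => (lam * Q x + lam * x ^ 2 * tailS f x) / (2 * (D lam x) ^ 2)
    with hw
  set W : ℝ → ℝ := fun lam => ∫ x in Set.Ioi (0:ℝ), w lam x * f x with hW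
  set A : ℝ → ℝ := fun lam => ∫ x in Set.Ioi (0:ℝ), x / D lam x * f x with hA
  set R : ℝ → ℝ := fun lam => ∫ x in Set.Ioi (0:ℝ), (∫ t in (0:ℝ)..x, 1 / D lam t) * f x with hR
  set J : ℝ → ℝ := fun lam => ∫ x in Set.Ioi x0, x / (D lam x) ^ 2 * f x with hJ
  have hDpos : ∀ lam, 0 < lam → lam < 1 / m → ∀ x, 0 < D lam x := by
    intro lam h0 h1 x
    rw [hDdef]
    have h2 : lam * m < 1 := (lt_div_iff₀ hm_pos).1 h1
    have h3 : lam * G x ≤ lam * m := mul_le_mul_of_nonneg_left (hGle x) h0.le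
    linarith
  have hDc : ∀ lam, Continuous (D lam) := by
    intro lam
    exact continuous_const.sub (continuous_const.mul hGc)
  have hDanti : ∀ lam, 0 < lam → ∀ x y, x ≤ y → D lam y ≤ D lam x := by
    intro lam h0 x y hxy
    rw [hDdef, hDdef]
    have := mul_le_mul_of_nonneg_left (hGmono hxy) h0.le
    linarith
  have hwc : ∀ lam, 0 < lam → lam < 1 / m → Continuous (w lam) := by
    intro lam h0 h1
    have hp := hDpos lam h0 h1
    refine Continuous.div ?_ ?_ ?_
    · exact (continuous_const.mul hQc).add ((continuous_const.mul (continuous_pow 2)).mul hFc)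
    · exact continuous_const.mul ((hDc lam).pow 2)
    · intro x
      have := hp x
      positivity
  have hac : ∀ lam, 0 < lam → lam < 1 / m → Continuous (fun x => x / D lam x) := by
    intro lam h0 h1
    exact continuous_id.div (hDc lam) fun x => (hDpos lam h0 h1 x).ne'
  have hic : ∀ lam, 0 < lam → lam < 1 / m → Continuous (fun x => 1 / D lam x) := by
    intro lam h0 h1
    exact continuous_const.div (hDc lam) fun x => (hDpos lam h0 h1 x).ne'
  have hrc : ∀ lam, 0 < lam → lam < 1 / m →
      Continuous (fun x => ∫ t in (0:ℝ)..x, 1 / D lam t) := by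
    intro lam h0 h1
    exact intervalIntegral.continuous_primitive
      (fun a b => (hic lam h0 h1).intervalIntegrable a b) 0
  have hjc : ∀ lam, 0 < lam → lam < 1 / m → Continuous (fun x => x / (D lam x) ^ 2) := by
    intro lam h0 h1
    exact continuous_id.div ((hDc lam).pow 2) fun x => (pow_pos (hDpos lam h0 h1 x) 2).ne'
  have hT : ∀ lam, 0 < lam → lam < 1 / m → TsrptMean f lam = W lam + R lam := by
    intro lam h0 h1
    rw [hW, hR]
    simp only
    rw [← integral_add (hint _ (hwc lam h0 h1)).integrableOn
      (hint _ (hrc lam h0 h1)).integrableOn]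
    refine integral_congr_ae (ae_of_all _ fun x => ?_)
    exact add_mul _ _ _
  have hH : ∀ lam, 0 < lam → lam < 1 / m →
      ∫ x in Set.Ioi (0:ℝ), Hbound f k lam x * f x = W lam + 2 * k * A lam := by
    intro lam h0 h1
    rw [hW, hA]
    simp only
    rw [← integral_const_mul, ← integral_add (hint _ (hwc lam h0 h1)).integrableOn
      ((hint _ (hac lam h0 h1)).const_mul _).integrableOn]
    refine integral_congr_ae (ae_of_all _ fun x => ?_)
    have : Hbound f k lam x = w lam x + 2 * k * x / D lam x := rfl
    simp only [this]
    ring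
  have hR0 : ∀ lam, 0 < lam → lam < 1 / m → 0 ≤ R lam := by
    intro lam h0 h1
    refine setIntegral_nonneg measurableSet_Ioi fun x hx => ?_
    refine mul_nonneg ?_ (hf_nonneg x)
    exact intervalIntegral.integral_nonneg (le_of_lt hx)
      fun t _ => (one_div_pos.2 (hDpos lam h0 h1 t)).le
  have hRA : ∀ lam, 0 < lam → lam < 1 / m → R lam ≤ A lam := by
    intro lam h0 h1
    refine setIntegral_mono_on (hint _ (hrc lam h0 h1)).integrableOn
      (hint _ (hac lam h0 h1)).integrableOn measurableSet_Ioi fun x hx => ?_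
    refine mul_le_mul_of_nonneg_right ?_ (hf_nonneg x)
    have h2 : ∫ t in (0:ℝ)..x, 1 / D lam t ≤ ∫ t in (0:ℝ)..x, 1 / D lam x := by
      refine intervalIntegral.integral_mono_on (le_of_lt hx)
        ((hic lam h0 h1).intervalIntegrable _ _) (by simp) ?_
      intro t ht
      exact one_div_le_one_div_of_le (hDpos lam h0 h1 x) (hDanti lam h0 t x ht.2)
    refine h2.trans (le_of_eq ?_)
    rw [intervalIntegral.integral_const, smul_eq_mul]
    ring
  have hJlow : ∀ δ, 0 < δ → δ < 1 / 2 → ∀ lam, (1 - δ) / m < lam → lam < 1 / m →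
      m / (4 * δ) ≤ J lam := by
    intro δ hδ hδ2 lam hl h1
    have h0 : 0 < lam := lt_trans (div_pos (by linarith) hm_pos) hl
    have hl' : 1 - δ < lam * m := (div_lt_iff₀ hm_pos).1 hl
    obtain ⟨x1, hx1⟩ := hGsurj (m * (1 - δ)) (mul_nonneg hm_pos.le (by linarith)) (by nlinarith)
    have h01 : x0 ≤ x1 := by
      by_contra h
      have := hGmono (not_le.1 h).le
      rw [hx0, hx1] at this
      nlinarith
    have hjn : ∀ x, 0 < x → 0 ≤ x / (D lam x) ^ 2 * f x := fun x hx =>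
      mul_nonneg (div_nonneg hx.le (sq_nonneg _)) (hf_nonneg x)
    have hji := hint _ (hjc lam h0 h1)
    have s1 : ∫ x in Set.Ioi x1, x / (D lam x) ^ 2 * f x ≤ J lam := by
      refine setIntegral_mono_set hji.integrableOn ?_ (Set.Ioi_subset_Ioi h01).eventuallyLE
      exact (ae_restrict_iff' measurableSet_Ioi).2
        (ae_of_all _ fun x hx => hjn x (hx0pos.trans hx))
    have s2 : ∫ x in Set.Ioi x1, 1 / (2 * δ) ^ 2 * (x * f x) ≤
        ∫ x in Set.Ioi x1, x / (D lam x) ^ 2 * f x := by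
      refine setIntegral_mono_on (h1int.const_mul _).integrableOn hji.integrableOn
        measurableSet_Ioi fun x hx => ?_
      have e : x / (D lam x) ^ 2 * f x = 1 / (D lam x) ^ 2 * (x * f x) := by ring
      rw [e]
      refine mul_le_mul_of_nonneg_right ?_ (htf x)
      have hDx : D lam x ≤ 2 * δ := by
        refine (hDanti lam h0 x1 x (le_of_lt hx)).trans ?_
        rw [hDdef, hx1]
        nlinarith
      have hp := hDpos lam h0 h1 x
      exact one_div_le_one_div_of_le (pow_pos hp 2) (pow_le_pow_left₀ hp.le hDx 2)
    have s3 : ∫ t in Set.Ioi x1, t * f t = m * δ := by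
      have := htail x1
      rw [hx1] at this
      linarith
    rw [integral_const_mul, s3] at s2
    have s4 : 1 / (2 * δ) ^ 2 * (m * δ) = m / (4 * δ) := by
      field_simp
      ring
    linarith
  have hAup : ∀ η, 0 < η → ∀ lam, 0 < lam → lam < 1 / m →
      A lam ≤ 2 * m + m / (4 * η) + η * J lam := by
    intro η hη lam h0 h1
    have hai := hint _ (hac lam h0 h1)
    have hji := hint _ (hjc lam h0 h1)
    have hlm : lam * m < 1 := (lt_div_iff₀ hm_pos).1 h1
    have e1 : A lam = (∫ x in Set.Ioc 0 x0, x / D lam x * f x) +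
        ∫ x in Set.Ioi x0, x / D lam x * f x := by
      rw [← setIntegral_union Set.Ioc_disjoint_Ioi_same measurableSet_Ioi hai.integrableOn
        hai.integrableOn, Set.Ioc_union_Ioi_eq_Ioi hx0pos.le]
    have e2 : ∫ x in Set.Ioc 0 x0, x / D lam x * f x ≤ ∫ x in Set.Ioc 0 x0, 2 * (x * f x) := by
      refine setIntegral_mono_on hai.integrableOn (h1int.const_mul _).integrableOn
        measurableSet_Ioc fun x hx => ?_
      have e : x / D lam x * f x = 1 / D lam x * (x * f x) := by ring
      rw [e]
      refine mul_le_mul_of_nonneg_right ?_ (htf x)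
      have hDx : 1 / 2 ≤ D lam x := by
        refine le_trans ?_ (hDanti lam h0 x x0 hx.2)
        rw [hDdef, hx0]
        linarith
      rw [div_le_iff₀ (hDpos lam h0 h1 x)]
      linarith
    have e3 : ∫ x in Set.Ioc 0 x0, 2 * (x * f x) ≤ 2 * m := by
      rw [integral_const_mul]
      have : ∫ t in Set.Ioc 0 x0, t * f t = G x0 :=
        (intervalIntegral.integral_of_le hx0pos.le).symm
      rw [this]
      linarith [hGle x0]
    have e4 : ∫ x in Set.Ioi x0, x / D lam x * f x ≤
        ∫ x in Set.Ioi x0, (η * (x / (D lam x) ^ 2 * f x) + 1 / (4 * η) * (x * f x)) := by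
      refine setIntegral_mono_on hai.integrableOn
        ((hji.const_mul _).add (h1int.const_mul _)).integrableOn measurableSet_Ioi fun x hx => ?_
      have hp := hDpos lam h0 h1 x
      have key : 1 / D lam x ≤ η * (1 / D lam x) ^ 2 + 1 / (4 * η) := by
        have : η * (1 / D lam x) ^ 2 + 1 / (4 * η) - 1 / D lam x =
            η * (1 / D lam x - 1 / (2 * η)) ^ 2 := by
          field_simp
          ring
        have h3 : 0 ≤ η * (1 / D lam x - 1 / (2 * η)) ^ 2 := by positivity
        linarith
      have := mul_le_mul_of_nonneg_right key (htf x)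
      calc x / D lam x * f x = 1 / D lam x * (x * f x) := by ring
        _ ≤ _ := this
        _ = _ := by ring
    rw [integral_add (hji.const_mul _).integrableOn (h1int.const_mul _).integrableOn,
      integral_const_mul, integral_const_mul] at e4
    have e5 : ∫ t in Set.Ioi x0, t * f t ≤ m := by
      have := htail x0
      rw [hx0] at this
      linarith
    have e6 : 1 / (4 * η) * ∫ t in Set.Ioi x0, t * f t ≤ m / (4 * η) := by
      calc _ ≤ 1 / (4 * η) * m := mul_le_mul_of_nonneg_left e5 (by positivity)
        _ = _ := by ring
    have e7 : ∫ x in Set.Ioi x0, x / (D lam x) ^ 2 * f x = J lam := rfl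
    rw [e7] at e4
    linarith
  have hWlow : ∀ lam, 1 / (2 * m) < lam → lam < 1 / m → m / (16 * B) * J lam ≤ W lam := by
    intro lam hl h1
    have h0 : 0 < lam := lt_trans (by positivity) hl
    have hwi := hint _ (hwc lam h0 h1)
    have hji := hint _ (hjc lam h0 h1)
    have s1 : ∫ x in Set.Ioi x0, w lam x * f x ≤ W lam := by
      refine setIntegral_mono_set hwi.integrableOn ?_ (Set.Ioi_subset_Ioi hx0pos.le).eventuallyLE
      refine (ae_restrict_iff' measurableSet_Ioi).2 (ae_of_all _ fun x hx => ?_)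
      refine mul_nonneg (div_nonneg ?_ (by positivity)) (hf_nonneg x)
      exact add_nonneg (mul_nonneg h0.le (hQ0 x (le_of_lt hx)))
        (mul_nonneg (by positivity) (htail0 x))
    refine le_trans ?_ s1
    rw [hJ]
    simp only
    rw [← integral_const_mul]
    refine setIntegral_mono_on_ae (hji.const_mul _).integrableOn hwi.integrableOn
      measurableSet_Ioi ?_
    filter_upwards [hfB'] with x hx hxx
    by_cases hfx : f x = 0
    · simp [hfx]
    obtain ⟨hx0', hxB⟩ := hx hfx
    rw [← mul_assoc]
    refine mul_le_mul_of_nonneg_right ?_ (hf_nonneg x)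
    have hp := hDpos lam h0 h1 x
    have n1 : m / 8 ≤ lam * Q x + lam * x ^ 2 * tailS f x := by
      have a1 : 1 / (2 * m) * (m ^ 2 / 4) ≤ lam * Q x :=
        mul_le_mul hl.le (hQlow x (le_of_lt hxx)) (by positivity) h0.le
      have a2 : 1 / (2 * m) * (m ^ 2 / 4) = m / 8 := by
        field_simp
        ring
      have a3 : 0 ≤ lam * x ^ 2 * tailS f x := mul_nonneg (by positivity) (htail0 x)
      linarith
    have n2 : m / (16 * B) * (x / D lam x ^ 2) = (m / 8 * (x / B)) / (2 * D lam x ^ 2) := by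
      field_simp
      ring
    rw [n2]
    refine div_le_div_of_nonneg_right (le_trans ?_ n1) (by positivity)
    have : x / B ≤ 1 := (div_le_one hB).2 hxB
    nlinarith
  rw [Metric.tendsto_nhds]
  intro ε hε
  have hkpos : (0:ℝ) < k := by exact_mod_cast hk
  set c : ℝ := m / (16 * B) with hc
  have hcpos : 0 < c := by positivity
  -- choose the tolerance
  set e : ℝ := ε / (4 * k) with he
  have hepos : 0 < e := by positivity
  set η : ℝ := e * c / 2 with hη
  have hηpos : 0 < η := by positivity
  set K : ℝ := 2 * m + m / (4 * η) with hK
  have hKpos : 0 < K := by positivity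
  obtain ⟨δ, hδ, hδ2, hδ3⟩ : ∃ δ : ℝ, 0 < δ ∧ δ < 1 / 2 ∧ K ≤ η * (m / (4 * δ)) := by
    refine ⟨min (1 / 4) (η * m / (4 * K)), lt_min (by norm_num) (by positivity),
      lt_of_le_of_lt (min_le_left _ _) (by norm_num), ?_⟩
    set d := min (1 / 4) (η * m / (4 * K)) with hd
    have hdpos : 0 < d := lt_min (by norm_num) (by positivity)
    have h2 : d ≤ η * m / (4 * K) := min_le_right _ _
    rw [le_div_iff₀ (by positivity)] at h2
    rw [← mul_div_assoc, le_div_iff₀ (by positivity)]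
    linarith
  have hlt : max ((1 - δ) / m) (1 / (2 * m)) < 1 / m := by
    refine max_lt ?_ ?_
    · exact div_lt_div_of_pos_right (by linarith) hm_pos
    · exact one_div_lt_one_div_of_lt hm_pos (by linarith)
  filter_upwards [Ioo_mem_nhdsLT hlt] with lam hlam
  obtain ⟨hl, h1⟩ := hlam
  have hl1 := lt_of_le_of_lt (le_max_left _ _) hl
  have hl2 := lt_of_le_of_lt (le_max_right _ _) hl
  have h0 : 0 < lam := lt_trans (by positivity) hl2
  have f1 := hJlow δ hδ hδ2 lam hl1 h1
  have f2 := hAup η hηpos lam h0 h1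
  have f3 := hWlow lam hl2 h1
  have f4 := hR0 lam h0 h1
  have f5 := hRA lam h0 h1
  have hJpos : 0 < J lam := lt_of_lt_of_le (by positivity) f1
  have hWpos : 0 < W lam := lt_of_lt_of_le (mul_pos hcpos hJpos) f3
  have f6 : A lam ≤ e * W lam := by
    have g1 : η * (m / (4 * δ)) ≤ η * J lam := mul_le_mul_of_nonneg_left f1 hηpos.le
    have g2 : e * (c * J lam) ≤ e * W lam := mul_le_mul_of_nonneg_left f3 hepos.le
    have g3 : e * (c * J lam) = η * J lam + η * J lam := by rw [hη]; ring
    linarith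
  rw [hT lam h0 h1, hH lam h0 h1, Real.dist_eq]
  have hWR : 0 < W lam + R lam := by linarith
  have g : (W lam + 2 * k * A lam) / (W lam + R lam) - 1 =
      (2 * k * A lam - R lam) / (W lam + R lam) := by
    field_simp
    ring
  rw [g, abs_div, abs_of_pos hWR, div_lt_iff₀ hWR]
  have hk1 : (1:ℝ) ≤ k := by exact_mod_cast hk
  have hA0 : 0 ≤ A lam := f4.trans f5
  have hkA : A lam ≤ k * A lam := le_mul_of_one_le_left hA0 hk1
  have h9 : 2 * k * A lam ≤ ε / 2 * W lam := by
    have : 2 * k * (e * W lam) = ε / 2 * W lam := by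
      rw [he]
      field_simp
      ring
    rw [← this]
    exact mul_le_mul_of_nonneg_left f6 (by positivity)
  have h10 : ε / 2 * W lam < ε * (W lam + R lam) := by nlinarith [mul_pos hε hWpos, mul_nonneg hε.le f4]
  rw [abs_lt]
  constructor <;> nlinarith
end

section
/- (Lemma 6.4, unbounded case, in explicit form.) Fix an integer k ≥ 1. If S is unbounded (F̄(x) > 0 for all x > 0) and the tail of S has upper Matuszewska index less than −2, expressed via the equivalent Potter-type bound — there exist constants C > 0, ε > 0 and x₀ > 0 such that F̄(γx) ≤ C·γ^{−(2+ε)}·F̄(x) for all x ≥ x₀ and all γ ≥ 1 — then the paper's k-server SRPT response-time bound is asymptotically tight against the single-server SRPT mean response time in heavy traffic: lim_{λ → (1/m)⁻} (∫₀^∞ H_λ(x)·f(x) dx) / T̄(λ) = 1. -/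
open MeasureTheory Filter

noncomputable def Gt (f : ℝ → ℝ) (x : ℝ) : ℝ := ∫ t in Set.Ioi x, t * f t

structure Hy (f : ℝ → ℝ) (m : ℝ) : Prop where
  meas : Measurable f
  nonneg : ∀ x, 0 ≤ f x
  zero : ∀ x ≤ 0, f x = 0
  fi : Integrable f
  gi : Integrable (fun t => t * f t)
  hm : Gt f 0 = m
  mpos : 0 < m
  unb : ∀ x > (0:ℝ), 0 < tailS f x

namespace Hy
variable {f : ℝ → ℝ} {m : ℝ}

theorem gnn (h : Hy f m) (t : ℝ) : 0 ≤ t * f t := by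
  rcases le_or_gt t 0 with ht | ht
  · simp [h.zero t ht]
  · exact mul_nonneg ht.le (h.nonneg t)

theorem G_nonneg (h : Hy f m) (x : ℝ) : 0 ≤ Gt f x :=
  integral_nonneg fun t => h.gnn t

theorem tail_nonneg (h : Hy f m) (x : ℝ) : 0 ≤ tailS f x :=
  integral_nonneg fun t => h.nonneg t

theorem G_anti (h : Hy f m) : Antitone (Gt f) := fun x y hxy =>
  setIntegral_mono_set h.gi.integrableOn (ae_of_all _ fun t => h.gnn t)
    (Set.Ioi_subset_Ioi hxy).eventuallyLE

theorem G_le_m (h : Hy f m) (x : ℝ) (hx : 0 ≤ x) : Gt f x ≤ m := by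
  rw [← h.hm]; exact h.G_anti hx

theorem tail_mul_le (h : Hy f m) (x : ℝ) : x * tailS f x ≤ Gt f x := by
  unfold tailS Gt
  rw [← integral_const_mul]
  apply setIntegral_mono_on (h.fi.const_mul x).integrableOn h.gi.integrableOn measurableSet_Ioi
  intro t ht
  exact mul_le_mul_of_nonneg_right (le_of_lt ht) (h.nonneg t)

theorem G_pos (h : Hy f m) (x : ℝ) (hx : 0 < x) : 0 < Gt f x :=
  lt_of_lt_of_le (mul_pos hx (h.unb x hx)) (h.tail_mul_le x)

theorem rho (h : Hy f m) (lam x : ℝ) : rhoLe f lam x = lam * (m - Gt f x) := by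
  unfold rhoLe
  rw [← h.hm]; unfold Gt
  rw [intervalIntegral.integral_Ioi_sub_Ioi' h.gi.integrableOn h.gi.integrableOn]

theorem G_step (h : Hy f m) (x : ℝ) (hx : 0 ≤ x) : Gt f x ≤ 2 * x * tailS f x + Gt f (2 * x) := by
  have h1 : Gt f x - Gt f (2*x) = ∫ t in x..(2*x), t * f t :=
    intervalIntegral.integral_Ioi_sub_Ioi' h.gi.integrableOn h.gi.integrableOn
  have h2 : tailS f x - tailS f (2*x) = ∫ t in x..(2*x), f t :=
    intervalIntegral.integral_Ioi_sub_Ioi' h.fi.integrableOn h.fi.integrableOn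
  have h3 : ∫ t in x..(2*x), t * f t ≤ ∫ t in x..(2*x), (2*x) * f t := by
    apply intervalIntegral.integral_mono_on (by linarith) h.gi.intervalIntegrable
      (h.fi.const_mul _).intervalIntegrable
    intro t ht
    exact mul_le_mul_of_nonneg_right ht.2 (h.nonneg t)
  rw [intervalIntegral.integral_const_mul, ← h1, ← h2] at h3
  have := mul_nonneg (by linarith : 0 ≤ 2 * x) (h.tail_nonneg (2*x))
  nlinarith

theorem G_tendsto (h : Hy f m) : Tendsto (Gt f) atTop (nhds 0) := by
  have h1 := intervalIntegral_tendsto_integral_Ioi (0:ℝ) h.gi.integrableOn (tendsto_id (α := ℝ) (x := atTop))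
  have h2 : (fun x => Gt f x) = fun x => Gt f 0 - ∫ t in (0:ℝ)..x, t * f t := by
    ext x
    unfold Gt
    rw [← intervalIntegral.integral_Ioi_sub_Ioi' h.gi.integrableOn h.gi.integrableOn]; ring
  have h3 := (tendsto_const_nhds (x := Gt f 0)).sub h1
  simp only [id] at h3
  change Tendsto (fun x => Gt f x) _ _
  rw [h2]
  simpa [Gt] using h3

theorem G_le (h : Hy f m) {C ε x₀ : ℝ} (hC : 0 < C) (hε : 0 < ε) (hx₀ : 0 < x₀)
    (hp : ∀ x ≥ x₀, ∀ γ ≥ (1:ℝ), tailS f (γ * x) ≤ C * γ ^ (-(2 + ε)) * tailS f x)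
    (x : ℝ) (hx : x₀ ≤ x) : Gt f x ≤ 4 * C * x * tailS f x := by
  have hx0 : 0 < x := by linarith
  have key : ∀ n : ℕ, Gt f x ≤ 4 * C * x * tailS f x * (1 - (1/2)^n) + Gt f (2^n * x) := by
    intro n
    induction n with
    | zero => simp
    | succ n ih =>
      have h1 := h.G_step (2^n * x) (by positivity)
      have h2 := hp x hx (2^n) (one_le_pow₀ (by norm_num))
      have h3 : ((2:ℝ)^n) ^ (-(2+ε)) ≤ ((1/2)^n)^2 := by
        have : ((2:ℝ)^n) ^ (-(2+ε)) ≤ ((2:ℝ)^n) ^ (-2:ℝ) :=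
          Real.rpow_le_rpow_of_exponent_le (one_le_pow₀ (by norm_num)) (by linarith)
        refine this.trans (le_of_eq ?_)
        rw [Real.rpow_neg (by positivity)]
        norm_cast
        simp
      have h4 : tailS f (2^n * x) ≤ C * ((1/2)^n)^2 * tailS f x := by
        refine h2.trans ?_
        have := h.tail_nonneg x
        gcongr
      have h5 : 2 * (2^n * x) * tailS f (2^n*x) ≤ 2 * (2^n * x) * (C * ((1/2)^n)^2 * tailS f x) := by
        gcongr
      have h6 : (2:ℝ)^n * (1/2)^n = 1 := by rw [← mul_pow]; norm_num
      have h7 : 2 * (2^n * x) * (C * ((1/2)^n)^2 * tailS f x) = 2 * x * C * tailS f x * (1/2)^n := by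
        linear_combination (2 * x * C * tailS f x * (1/2)^n) * h6
      have h8 : (2:ℝ)^(n+1) * x = 2 * (2^n * x) := by ring
      rw [h8]
      have h9 : ((1:ℝ)/2)^(n+1) = (1/2)^n / 2 := by ring
      rw [h9]
      linarith
  have hl : Tendsto (fun n : ℕ => 4 * C * x * tailS f x * (1 - (1/2)^n) + Gt f (2^n * x)) atTop
      (nhds (4 * C * x * tailS f x * (1 - 0) + 0)) := by
    apply Tendsto.add
    · exact ((tendsto_const_nhds).sub
        (tendsto_pow_atTop_nhds_zero_of_lt_one (by norm_num) (by norm_num))).const_mul _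
    · exact h.G_tendsto.comp ((tendsto_pow_atTop_atTop_of_one_lt (by norm_num)).atTop_mul_const hx0)
  have := ge_of_tendsto' hl key
  simpa using this

theorem xG (h : Hy f m) {C ε x₀ : ℝ} (hC : 0 < C) (hε : 0 < ε) (hx₀ : 0 < x₀)
    (hp : ∀ x ≥ x₀, ∀ γ ≥ (1:ℝ), tailS f (γ * x) ≤ C * γ ^ (-(2 + ε)) * tailS f x) :
    Tendsto (fun x => x * Gt f x) atTop (nhds 0) := by
  have hb : ∀ᶠ x in atTop, x * Gt f x ≤ (4 * C * C * x₀^2 * tailS f x₀) * (x / x₀)^(-ε) := by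
    filter_upwards [eventually_ge_atTop x₀] with x hx
    have hx0 : 0 < x := by linarith
    have h1 := h.G_le hC hε hx₀ hp x hx
    have h2 := hp x₀ le_rfl (x / x₀) ((one_le_div hx₀).2 hx)
    rw [div_mul_cancel₀ _ hx₀.ne'] at h2
    have hd : 0 < x / x₀ := by positivity
    have h3 : (x/x₀)^(-(2+ε)) = (x/x₀)^(-ε) * ((x/x₀)^2)⁻¹ := by
      rw [neg_add, Real.rpow_add hd, Real.rpow_neg hd.le 2]
      norm_cast
      ring
    rw [h3] at h2
    calc x * Gt f x ≤ x * (4 * C * x * tailS f x) := by gcongr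
      _ ≤ x * (4 * C * x * (C * ((x/x₀)^(-ε) * ((x/x₀)^2)⁻¹) * tailS f x₀)) := by gcongr
      _ = _ := by field_simp
  refine tendsto_of_tendsto_of_tendsto_of_le_of_le' tendsto_const_nhds ?_ ?_ hb
  · have := (((tendsto_rpow_neg_atTop hε).comp (tendsto_id.atTop_div_const hx₀))).const_mul
      (4 * C * C * x₀^2 * tailS f x₀)
    simpa using this
  · filter_upwards [eventually_ge_atTop 0] with x hx
    exact mul_nonneg hx (h.G_nonneg x)

end Hy

noncomputable def vv (f : ℝ → ℝ) (x : ℝ) : ℝ := (∫ t in (0:ℝ)..x, t ^ 2 * f t) + x ^ 2 * tailS f x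

noncomputable def Wt (f : ℝ → ℝ) (lam x : ℝ) : ℝ := lam * vv f x / (2 * (1 - rhoLe f lam x) ^ 2)

noncomputable def Rt (f : ℝ → ℝ) (lam x : ℝ) : ℝ := ∫ t in (0:ℝ)..x, 1 / (1 - rhoLe f lam t)

theorem Tsrpt1_eq (f : ℝ → ℝ) (lam x : ℝ) : Tsrpt1 f lam x = Wt f lam x + Rt f lam x := by
  unfold Tsrpt1 Wt Rt vv; ring

theorem Hbound_eq (f : ℝ → ℝ) (k : ℕ) (lam x : ℝ) :
    Hbound f k lam x = Wt f lam x + 2 * (k:ℝ) * (x / (1 - rhoLe f lam x)) := by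
  unfold Hbound Wt vv; ring

namespace Hy
variable {f : ℝ → ℝ} {m : ℝ}

theorem one_sub (h : Hy f m) (lam x : ℝ) :
    1 - rhoLe f lam x = (1 - lam * m) + lam * Gt f x := by
  rw [h.rho]; ring

theorem one_sub_ge (h : Hy f m) {lam : ℝ} (hl : 0 < lam) (x : ℝ) :
    1 - lam * m ≤ 1 - rhoLe f lam x := by
  rw [h.one_sub]
  have := mul_nonneg hl.le (h.G_nonneg x)
  linarith

theorem one_sub_pos (h : Hy f m) {lam : ℝ} (hl : 0 < lam) (hl1 : lam * m < 1) (x : ℝ) :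
    0 < 1 - rhoLe f lam x := by
  have := h.one_sub_ge hl x
  linarith

theorem sq_ii (h : Hy f m) (a b : ℝ) : IntervalIntegrable (fun t => t^2 * f t) volume a b := by
  have := (h.gi.intervalIntegrable (a := a) (b := b)).continuousOn_mul
    (g := fun t => t) continuous_id.continuousOn
  refine this.congr ?_
  intro t _
  simp only; ring

theorem vv_nonneg (h : Hy f m) (x : ℝ) (hx : 0 ≤ x) : 0 ≤ vv f x := by
  unfold vv
  have h1 : 0 ≤ ∫ t in (0:ℝ)..x, t ^ 2 * f t :=
    intervalIntegral.integral_nonneg hx fun t _ => mul_nonneg (sq_nonneg _) (h.nonneg t)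
  have := mul_nonneg (sq_nonneg x) (h.tail_nonneg x)
  linarith

theorem vv_ge (h : Hy f m) (x : ℝ) (hx : 1 ≤ x) : tailS f 1 ≤ vv f x := by
  unfold vv
  have h2 : tailS f 1 - tailS f x = ∫ t in (1:ℝ)..x, f t :=
    intervalIntegral.integral_Ioi_sub_Ioi' h.fi.integrableOn h.fi.integrableOn
  have h3 : ∫ t in (1:ℝ)..x, f t ≤ ∫ t in (1:ℝ)..x, t^2 * f t := by
    apply intervalIntegral.integral_mono_on hx h.fi.intervalIntegrable (h.sq_ii _ _)
    intro t ht
    have : 1 ≤ t^2 := by nlinarith [ht.1]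
    nlinarith [h.nonneg t]
  have h4 : 0 ≤ ∫ t in (0:ℝ)..1, t ^ 2 * f t :=
    intervalIntegral.integral_nonneg (by norm_num) fun t _ => mul_nonneg (sq_nonneg _) (h.nonneg t)
  have h5 := intervalIntegral.integral_add_adjacent_intervals (h.sq_ii 0 1) (h.sq_ii 1 x)
  have h6 : tailS f x ≤ x^2 * tailS f x := by
    have : 1 ≤ x^2 := by nlinarith
    nlinarith [h.tail_nonneg x]
  linarith

theorem vv_le (h : Hy f m) (x : ℝ) (hx : 0 ≤ x) : vv f x ≤ 2 * m * x := by
  unfold vv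
  have h3 : ∫ t in (0:ℝ)..x, t^2 * f t ≤ ∫ t in (0:ℝ)..x, x * (t * f t) := by
    apply intervalIntegral.integral_mono_on hx (h.sq_ii _ _) (h.gi.const_mul _).intervalIntegrable
    intro t ht
    have := mul_le_mul_of_nonneg_right ht.2 (h.gnn t)
    nlinarith
  rw [intervalIntegral.integral_const_mul] at h3
  have h4 : Gt f 0 - Gt f x = ∫ t in (0:ℝ)..x, t * f t :=
    intervalIntegral.integral_Ioi_sub_Ioi' h.gi.integrableOn h.gi.integrableOn
  rw [h.hm] at h4
  rw [← h4] at h3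
  have h5 := mul_le_mul_of_nonneg_left (h.tail_mul_le x) hx
  have h6 := mul_le_mul_of_nonneg_left (h.G_le_m x hx) hx
  have h7 := mul_nonneg hx h.mpos.le
  nlinarith

theorem rho_cont (h : Hy f m) (lam : ℝ) : Continuous (rhoLe f lam) := by
  unfold rhoLe
  exact continuous_const.mul
    (intervalIntegral.continuous_primitive (fun a b => h.gi.intervalIntegrable) 0)

theorem vv_meas (h : Hy f m) : Measurable (vv f) := by
  unfold vv
  have h1 : Antitone (tailS f) := fun x y hxy =>
    setIntegral_mono_set h.fi.integrableOn (ae_of_all _ fun t => h.nonneg t)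
      (Set.Ioi_subset_Ioi hxy).eventuallyLE
  exact (intervalIntegral.continuous_primitive (h.sq_ii) 0).measurable.add
    ((measurable_id.pow_const 2).mul h1.measurable)

theorem Wt_nonneg (h : Hy f m) {lam : ℝ} (hl : 0 < lam) (x : ℝ) (hx : 0 ≤ x) :
    0 ≤ Wt f lam x := by
  unfold Wt
  have := h.vv_nonneg x hx
  positivity

theorem inv_cont (h : Hy f m) {lam : ℝ} (hl : 0 < lam) (hl1 : lam * m < 1) :
    Continuous (fun t => 1 / (1 - rhoLe f lam t)) :=
  continuous_const.div (continuous_const.sub (h.rho_cont lam))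
    fun x => (h.one_sub_pos hl hl1 x).ne'

theorem Rt_nonneg (h : Hy f m) {lam : ℝ} (hl : 0 < lam) (hl1 : lam * m < 1) (x : ℝ) (hx : 0 ≤ x) :
    0 ≤ Rt f lam x :=
  intervalIntegral.integral_nonneg hx fun t _ =>
    div_nonneg zero_le_one (h.one_sub_pos hl hl1 t).le

theorem Rt_le (h : Hy f m) {lam : ℝ} (hl : 0 < lam) (hl1 : lam * m < 1) (x : ℝ) (hx : 0 ≤ x) :
    Rt f lam x ≤ x / (1 - rhoLe f lam x) := by
  have h3 : Rt f lam x ≤ ∫ t in (0:ℝ)..x, 1 / (1 - rhoLe f lam x) := by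
    apply intervalIntegral.integral_mono_on hx ((h.inv_cont hl hl1).intervalIntegrable _ _)
      (by simp)
    intro t ht
    apply one_div_le_one_div_of_le (h.one_sub_pos hl hl1 x)
    rw [h.one_sub, h.one_sub]
    have := mul_le_mul_of_nonneg_left (h.G_anti ht.2) hl.le
    linarith
  refine h3.trans (le_of_eq ?_)
  rw [intervalIntegral.integral_const]
  simp [div_eq_mul_inv]

theorem int_of_le (h : Hy f m) {g : ℝ → ℝ} (hg : Measurable g) (K : ℝ)
    (h0 : ∀ x, 0 ≤ x → 0 ≤ g x) (h1 : ∀ x, 0 ≤ x → g x ≤ K * x) :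
    IntegrableOn (fun x => g x * f x) (Set.Ioi 0) := by
  refine Integrable.mono' (h.gi.const_mul K).integrableOn (hg.mul h.meas).aestronglyMeasurable ?_
  refine (ae_restrict_iff' measurableSet_Ioi).2 (ae_of_all _ fun x hx => ?_)
  have hx' : 0 ≤ x := le_of_lt hx
  rw [Real.norm_of_nonneg (mul_nonneg (h0 x hx') (h.nonneg x))]
  have := mul_le_mul_of_nonneg_right (h1 x hx') (h.nonneg x)
  linarith

theorem B_le (h : Hy f m) {lam : ℝ} (hl : 0 < lam) (hl1 : lam * m < 1) (x : ℝ) (hx : 0 ≤ x) :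
    x / (1 - rhoLe f lam x) ≤ x / (1 - lam * m) :=
  div_le_div_of_nonneg_left hx (by linarith) (h.one_sub_ge hl x)

theorem B_int (h : Hy f m) {lam : ℝ} (hl : 0 < lam) (hl1 : lam * m < 1) :
    IntegrableOn (fun x => x / (1 - rhoLe f lam x) * f x) (Set.Ioi 0) := by
  refine h.int_of_le (measurable_id.div (measurable_const.sub (h.rho_cont lam).measurable))
    (1 / (1 - lam * m)) (fun x hx => div_nonneg hx (h.one_sub_pos hl hl1 x).le) fun x hx => ?_
  have := h.B_le hl hl1 x hx
  rw [one_div_mul_eq_div]; exact this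

theorem R_int (h : Hy f m) {lam : ℝ} (hl : 0 < lam) (hl1 : lam * m < 1) :
    IntegrableOn (fun x => Rt f lam x * f x) (Set.Ioi 0) := by
  refine h.int_of_le ?_
    (1 / (1 - lam * m)) (fun x hx => h.Rt_nonneg hl hl1 x hx) fun x hx => ?_
  · exact (intervalIntegral.continuous_primitive
      (fun a b => (h.inv_cont hl hl1).intervalIntegrable a b) 0).measurable
  have := h.B_le hl hl1 x hx
  rw [one_div_mul_eq_div]; exact (h.Rt_le hl hl1 x hx).trans this

theorem W_int (h : Hy f m) {lam : ℝ} (hl : 0 < lam) (hl1 : lam * m < 1) :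
    IntegrableOn (fun x => Wt f lam x * f x) (Set.Ioi 0) := by
  refine h.int_of_le ?_ (lam * (2 * m) / (2 * (1 - lam * m)^2))
    (fun x hx => h.Wt_nonneg hl x hx) fun x hx => ?_
  · exact (measurable_const.mul h.vv_meas).div
      (measurable_const.mul ((measurable_const.sub (h.rho_cont lam).measurable).pow_const 2))
  have h1 := h.vv_le x hx
  have h2 := h.one_sub_ge hl x
  have h3 : 0 < 1 - lam * m := by linarith
  have h4 := h.vv_nonneg x hx
  have h5 := h.mpos
  calc Wt f lam x ≤ lam * (2 * m * x) / (2 * (1 - lam * m)^2) := by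
        unfold Wt; gcongr
    _ = _ := by ring

/-- lower bound on the waiting term -/
theorem W_ge (h : Hy f m) {lam : ℝ} (hl : 1 / (2 * m) ≤ lam) (hl1 : lam * m < 1)
    (x : ℝ) (hx : 1 ≤ x) :
    (tailS f 1 / (4 * m)) / (1 - rhoLe f lam x)^2 ≤ Wt f lam x := by
  have hm := h.mpos
  have hl0 : 0 < lam := lt_of_lt_of_le (by positivity) hl
  have h1 := h.one_sub_pos hl0 hl1 x
  have h2 := h.vv_ge x hx
  have h3 := h.tail_nonneg 1
  calc (tailS f 1 / (4 * m)) / (1 - rhoLe f lam x)^2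
      = (1 / (2 * m)) * tailS f 1 / (2 * (1 - rhoLe f lam x)^2) := by field_simp; norm_num
    _ ≤ _ := by unfold Wt; gcongr

theorem W_large (h : Hy f m) {D y : ℝ} (hD : 0 < D) (hy : 1 ≤ y) (hG : Gt f y ≤ D * y * tailS f y)
    {lam : ℝ} (hl : 1 / (2 * m) ≤ lam) (hl1 : lam * m < 1) (hl2 : 1 - lam * m ≤ Gt f y / m) :
    (tailS f 1 / (4 * m)) * m^2 / (4 * D) / (y * Gt f y) ≤
      ∫ x in Set.Ioi (0:ℝ), Wt f lam x * f x := by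
  have hm := h.mpos
  have hl0 : 0 < lam := lt_of_lt_of_le (by positivity) hl
  have hGp := h.G_pos y (by linarith)
  have ht := h.unb 1 one_pos
  set c := tailS f 1 / (4 * m) with hc
  have hcp : 0 < c := by positivity
  have hlm : lam ≤ 1 / m := by rw [le_div_iff₀ hm]; exact hl1.le
  have hb : ∀ x, y < x → c / (2 * Gt f y / m)^2 ≤ Wt f lam x := by
    intro x hx
    refine le_trans ?_ (h.W_ge hl hl1 x (by linarith))
    have hp := h.one_sub_pos hl0 hl1 x
    have : 1 - rhoLe f lam x ≤ 2 * Gt f y / m := by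
      rw [h.one_sub]
      have h1 := h.G_anti hx.le
      have : lam * Gt f x ≤ 1 / m * Gt f y :=
        mul_le_mul hlm h1 (h.G_nonneg x) (by positivity)
      calc _ ≤ Gt f y / m + 1 / m * Gt f y := by linarith
        _ = _ := by ring
    gcongr
  have h1 : ∫ x in Set.Ioi y, Wt f lam x * f x ≤ ∫ x in Set.Ioi (0:ℝ), Wt f lam x * f x := by
    apply setIntegral_mono_set (h.W_int hl0 hl1)
    · refine (ae_restrict_iff' measurableSet_Ioi).2 (ae_of_all _ fun x hx => ?_)
      exact mul_nonneg (h.Wt_nonneg hl0 x (le_of_lt hx)) (h.nonneg x)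
    · exact (Set.Ioi_subset_Ioi (by linarith)).eventuallyLE
  have h2 : c / (2 * Gt f y / m)^2 * tailS f y ≤ ∫ x in Set.Ioi y, Wt f lam x * f x := by
    unfold tailS
    rw [← integral_const_mul]
    apply setIntegral_mono_on (h.fi.const_mul _).integrableOn
      ((h.W_int hl0 hl1).mono_set (Set.Ioi_subset_Ioi (by linarith))) measurableSet_Ioi
    intro x hx
    exact mul_le_mul_of_nonneg_right (hb x hx) (h.nonneg x)
  refine le_trans ?_ (h2.trans h1)
  have hyp : 0 < y := by linarith
  have h3 : Gt f y / (D * y) ≤ tailS f y := by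
    rw [div_le_iff₀ (by positivity)]; linarith
  calc c * m^2 / (4 * D) / (y * Gt f y) = c / (2 * Gt f y / m)^2 * (Gt f y / (D * y)) := by
        field_simp; norm_num
    _ ≤ _ := by gcongr

theorem B_bound (h : Hy f m) {η x1 : ℝ} (hη : 0 < η) (hx1 : 1 ≤ x1)
    (hG : ∀ x ≥ x1, x * Gt f x ≤ (η * (tailS f 1 / (4 * m)) / 2) * m)
    {lam : ℝ} (hl : 1 / (2 * m) ≤ lam) (hl1 : lam * m < 1)
    (hl2 : (1 - lam * m) * x1 ≤ η * (tailS f 1 / (4 * m)) / 2) :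
    ∫ x in Set.Ioi (0:ℝ), x / (1 - rhoLe f lam x) * f x ≤
      η * (∫ x in Set.Ioi (0:ℝ), Wt f lam x * f x) + (m / (Gt f x1 / (2 * m)) + m) := by
  have hm := h.mpos
  have hl0 : 0 < lam := lt_of_lt_of_le (by positivity) hl
  have hGp := h.G_pos x1 (by linarith)
  have ht := h.unb 1 one_pos
  set c := tailS f 1 / (4 * m) with hc
  have hcp : 0 < c := by positivity
  have hlm : lam ≤ 1 / m := by rw [le_div_iff₀ hm]; exact hl1.le
  set δ := 1 - lam * m with hδ
  have hδp : 0 < δ := by rw [hδ]; linarith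
  set κ := η * c / 2 with hκ
  have hκp : 0 < κ := by positivity
  set c2 := Gt f x1 / (2 * m) with hc2
  have hc2p : 0 < c2 := by positivity
  have hpt : ∀ x, 0 < x → x / (1 - rhoLe f lam x) * f x ≤
      η * (Wt f lam x * f x) + (1 / c2 * (x * f x)
        + (Set.Ioi (κ / δ)).indicator (fun x => 1 / δ * (x * f x)) x) := by
    intro x hx
    have hfx := h.nonneg x
    have hp := h.one_sub_pos hl0 hl1 x
    have hi : 0 ≤ (Set.Ioi (κ / δ)).indicator (fun x => 1 / δ * (x * f x)) x :=
      Set.indicator_nonneg (fun t _ => mul_nonneg (by positivity) (h.gnn t)) x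
    have hw : 0 ≤ η * (Wt f lam x * f x) :=
      mul_nonneg hη.le (mul_nonneg (h.Wt_nonneg hl0 x hx.le) hfx)
    have hc' : 0 ≤ 1 / c2 * (x * f x) := by positivity
    rcases lt_or_ge x x1 with hxx | hxx
    · have h1 : c2 ≤ 1 - rhoLe f lam x := by
        rw [h.one_sub, hc2]
        have h1 := h.G_anti hxx.le
        have : 1 / (2 * m) * Gt f x1 ≤ lam * Gt f x :=
          mul_le_mul hl h1 hGp.le hl0.le
        rw [one_div_mul_eq_div] at this
        linarith
      have : x / (1 - rhoLe f lam x) * f x ≤ x / c2 * f x := by gcongr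
      have h3 : x / c2 * f x = 1 / c2 * (x * f x) := by ring
      linarith
    · rcases le_or_gt x (κ / δ) with hk | hk
      · have h1 : x * (1 - rhoLe f lam x) ≤ η * c := by
          rw [h.one_sub, ← hδ]
          rw [le_div_iff₀ hδp] at hk
          have h2 : x * (lam * Gt f x) ≤ κ := by
            have := hG x hxx
            calc x * (lam * Gt f x) = lam * (x * Gt f x) := by ring
              _ ≤ 1 / m * (κ * m) :=
                mul_le_mul hlm this (mul_nonneg hx.le (h.G_nonneg x)) (by positivity)
              _ = κ := by field_simp
          have h3 : κ + κ = η * c := by rw [hκ]; ring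
          linarith
        have h2 : x / (1 - rhoLe f lam x) ≤ η * Wt f lam x := by
          calc x / (1 - rhoLe f lam x) = x * (1 - rhoLe f lam x) / (1 - rhoLe f lam x)^2 := by
                field_simp
            _ ≤ η * c / (1 - rhoLe f lam x)^2 := by gcongr
            _ = η * (c / (1 - rhoLe f lam x)^2) := by ring
            _ ≤ _ := mul_le_mul_of_nonneg_left (h.W_ge hl hl1 x (by linarith)) hη.le
        have := mul_le_mul_of_nonneg_right h2 hfx
        linarith
      · rw [Set.indicator_of_mem (Set.mem_Ioi.2 hk)]
        have h1 := mul_le_mul_of_nonneg_right (h.B_le hl0 hl1 x hx.le) hfx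
        have h3 : x / (1 - lam * m) * f x = 1 / δ * (x * f x) := by rw [← hδ]; ring
        linarith
  have i1 := (h.W_int hl0 hl1).const_mul η
  have i2 : IntegrableOn (fun x => 1 / c2 * (x * f x)) (Set.Ioi 0) := (h.gi.const_mul _).integrableOn
  have i3 : IntegrableOn ((Set.Ioi (κ / δ)).indicator (fun x => 1 / δ * (x * f x))) (Set.Ioi 0) :=
    ((h.gi.const_mul _).indicator measurableSet_Ioi).integrableOn
  have hmain := setIntegral_mono_on (h.B_int hl0 hl1) (i1.add (i2.add i3)) measurableSet_Ioi
    (fun x hx => hpt x hx)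
  refine hmain.trans ?_
  have e1 : ∫ x in Set.Ioi (0:ℝ), (η * (Wt f lam x * f x) + (1 / c2 * (x * f x)
        + (Set.Ioi (κ / δ)).indicator (fun x => 1 / δ * (x * f x)) x)) =
      η * (∫ x in Set.Ioi (0:ℝ), Wt f lam x * f x) + (1 / c2 * m + 1 / δ * Gt f (κ / δ)) := by
    have i23 : Integrable (fun x => 1 / c2 * (x * f x)
        + (Set.Ioi (κ / δ)).indicator (fun x => 1 / δ * (x * f x)) x) (volume.restrict (Set.Ioi 0)) :=
      i2.add i3
    rw [integral_add i1 i23, integral_add i2 i3, integral_const_mul, integral_const_mul,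
      setIntegral_indicator measurableSet_Ioi, integral_const_mul, ← h.hm]
    have : Set.Ioi (0:ℝ) ∩ Set.Ioi (κ / δ) = Set.Ioi (κ / δ) :=
      Set.inter_eq_right.2 (Set.Ioi_subset_Ioi (by positivity))
    rw [this]; rfl
  have hk1 : x1 ≤ κ / δ := by rw [le_div_iff₀ hδp]; linarith
  have h5 := hG _ hk1
  have h6 : 1 / δ * Gt f (κ / δ) ≤ m := by
    have : κ * (1 / δ * Gt f (κ / δ)) ≤ κ * m := by
      calc _ = κ / δ * Gt f (κ / δ) := by ring
        _ ≤ _ := h5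
    exact le_of_mul_le_mul_left this hκp
  refine (le_of_eq e1).trans ?_
  have h7 : m / c2 = 1 / c2 * m := by ring
  linarith

end Hy
/-- **Lemma 6.4, unbounded case.** If `S` is unbounded with tail of upper
Matuszewska index less than `−2` (Potter-type bound), then
`lim_{λ → (1/m)⁻} (∫₀^∞ H_λ(x) f(x) dx) / T̄(λ) = 1`. -/
theorem Hbound_ratio_tendsto_one_unbounded
    (f : ℝ → ℝ) (m : ℝ)
    (hf_meas : Measurable f)
    (hf_nonneg : ∀ x, 0 ≤ f x)
    (hf_zero : ∀ x ≤ 0, f x = 0)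
    (hf_prob : ∫ t in Set.Ioi (0:ℝ), f t = 1)
    (hm_int : Integrable (fun t => t * f t) (volume.restrict (Set.Ioi 0)))
    (hm_def : m = ∫ t in Set.Ioi (0:ℝ), t * f t)
    (hm_pos : 0 < m)
    (k : ℕ) (hk : 1 ≤ k)
    (hunbounded : ∀ x > (0:ℝ), 0 < tailS f x)
    (hmatuszewska : ∃ C > (0:ℝ), ∃ ε > (0:ℝ), ∃ x₀ > (0:ℝ),
      ∀ x ≥ x₀, ∀ γ ≥ (1:ℝ), tailS f (γ * x) ≤ C * γ ^ (-(2 + ε)) * tailS f x) :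
    Tendsto (fun lam => (∫ x in Set.Ioi (0:ℝ), Hbound f k lam x * f x) / TsrptMean f lam)
      (nhdsWithin (1/m) (Set.Iio (1/m))) (nhds 1) := by
  obtain ⟨C, hC, ε, hε, x₀, hx₀, hp⟩ := hmatuszewska
  have hfi : Integrable f := by
    have h1 : IntegrableOn f (Set.Ioi 0) := by
      refine Integrable.of_integral_ne_zero ?_
      rw [hf_prob]; exact one_ne_zero
    refine (integrableOn_iff_integrable_of_support_subset ?_).1 h1
    intro x hx
    by_contra hx'
    exact hx (hf_zero x (not_lt.1 hx'))
  have hgi : Integrable (fun t => t * f t) := by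
    refine (integrableOn_iff_integrable_of_support_subset ?_).1 hm_int
    intro x hx
    by_contra hx'
    exact hx (by simp [hf_zero x (not_lt.1 hx')])
  have h : Hy f m := ⟨hf_meas, hf_nonneg, hf_zero, hfi, hgi, hm_def.symm, hm_pos, hunbounded⟩
  have hxG := h.xG hC hε hx₀ hp
  have hk0 : (1:ℝ) ≤ k := by exact_mod_cast hk
  have ht := hunbounded 1 one_pos
  rw [Metric.tendsto_nhds]
  intro e he
  obtain ⟨η, hη⟩ : ∃ η : ℝ, η = e / (8 * k) := ⟨_, rfl⟩
  have hηp : 0 < η := by rw [hη]; positivity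
  obtain ⟨x1, hx1, hG1⟩ : ∃ x1 : ℝ, 1 ≤ x1 ∧
      ∀ x ≥ x1, x * Gt f x ≤ (η * (tailS f 1 / (4 * m)) / 2) * m := by
    have := hxG.eventually_le_const (u := (η * (tailS f 1 / (4 * m)) / 2) * m) (by positivity)
    obtain ⟨a, ha⟩ := eventually_atTop.1 this
    exact ⟨max a 1, le_max_right _ _, fun x hx => ha x ((le_max_left _ _).trans hx)⟩
  obtain ⟨K, hK⟩ : ∃ K, K = m / (Gt f x1 / (2 * m)) + m := ⟨_, rfl⟩
  have hG1p := h.G_pos x1 (by linarith)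
  have hKp : 0 < K := by rw [hK]; positivity
  obtain ⟨A, hA⟩ : ∃ A, A = (tailS f 1 / (4 * m)) * m^2 / (4 * (4 * C)) := ⟨_, rfl⟩
  have hAp : 0 < A := by rw [hA]; positivity
  obtain ⟨y, hy1, hyx, hyG⟩ : ∃ y : ℝ, 1 ≤ y ∧ x₀ ≤ y ∧ y * Gt f y ≤ A / (K / η) := by
    have := hxG.eventually_le_const (u := A / (K / η)) (by positivity)
    obtain ⟨y, hy⟩ := (((eventually_ge_atTop (1:ℝ)).and (eventually_ge_atTop x₀)).and this).exists
    exact ⟨y, hy.1.1, hy.1.2, hy.2⟩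
  have hGyp := h.G_pos y (by linarith)
  have hyp : 0 < y := by linarith
  have hlim : Tendsto (fun lam : ℝ => 1 - lam * m) (nhdsWithin (1/m) (Set.Iio (1/m))) (nhds 0) := by
    have h1 : Continuous (fun lam : ℝ => 1 - lam * m) := by fun_prop
    have h2 := h1.tendsto (1/m)
    have h3 : 1 - 1 / m * m = 0 := by field_simp; norm_num
    rw [h3] at h2
    exact h2.mono_left nhdsWithin_le_nhds
  have ev1 := hlim.eventually_le_const (u := Gt f y / m) (by positivity)
  have ev2 := hlim.eventually_le_const (u := η * (tailS f 1 / (4 * m)) / 2 / x1) (by positivity)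
  have ev3 := hlim.eventually_le_const (u := 1 / 2) (by norm_num)
  filter_upwards [ev1, ev2, ev3, self_mem_nhdsWithin] with lam h1 h2 h3 h4
  have hl1 : lam * m < 1 := (lt_div_iff₀ hm_pos).1 h4
  have hl : 1 / (2 * m) ≤ lam := by rw [div_le_iff₀ (by positivity)]; linarith
  have hl0 : 0 < lam := lt_of_lt_of_le (by positivity) hl
  have hB := h.B_bound hηp hx1 hG1 hl hl1 ((le_div_iff₀ (by linarith)).1 h2)
  have hW := h.W_large (D := 4 * C) (by positivity) hy1 (h.G_le hC hε hx₀ hp y hyx) hl hl1 h1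
  rw [← hK] at hB
  rw [← hA] at hW
  have iW := h.W_int hl0 hl1
  have iR := h.R_int hl0 hl1
  have iB := h.B_int hl0 hl1
  have eH : ∫ x in Set.Ioi (0:ℝ), Hbound f k lam x * f x =
      (∫ x in Set.Ioi (0:ℝ), Wt f lam x * f x)
        + 2 * k * ∫ x in Set.Ioi (0:ℝ), x / (1 - rhoLe f lam x) * f x := by
    rw [← integral_const_mul, ← integral_add iW (iB.const_mul _)]
    congr 1; ext x; rw [Hbound_eq]; ring
  have eT : TsrptMean f lam = (∫ x in Set.Ioi (0:ℝ), Wt f lam x * f x)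
        + ∫ x in Set.Ioi (0:ℝ), Rt f lam x * f x := by
    unfold TsrptMean
    rw [← integral_add iW iR]
    congr 1; ext x; rw [Tsrpt1_eq]; ring
  have hR0 : 0 ≤ ∫ x in Set.Ioi (0:ℝ), Rt f lam x * f x :=
    setIntegral_nonneg measurableSet_Ioi fun x hx =>
      mul_nonneg (h.Rt_nonneg hl0 hl1 x (le_of_lt hx)) (hf_nonneg x)
  have hRB : ∫ x in Set.Ioi (0:ℝ), Rt f lam x * f x ≤
      ∫ x in Set.Ioi (0:ℝ), x / (1 - rhoLe f lam x) * f x :=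
    setIntegral_mono_on iR iB measurableSet_Ioi fun x hx =>
      mul_le_mul_of_nonneg_right (h.Rt_le hl0 hl1 x (le_of_lt hx)) (hf_nonneg x)
  rw [eH, eT]
  generalize (∫ x in Set.Ioi (0:ℝ), Wt f lam x * f x) = W at *
  generalize (∫ x in Set.Ioi (0:ℝ), Rt f lam x * f x) = R at *
  generalize (∫ x in Set.Ioi (0:ℝ), x / (1 - rhoLe f lam x) * f x) = B at *
  have hWK : K / η ≤ W := by
    refine le_trans ?_ hW
    rw [le_div_iff₀ (by positivity)]
    rw [le_div_iff₀ (by positivity)] at hyG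
    linarith
  have hWp : 0 < W := lt_of_lt_of_le (by positivity) hWK
  have hKW : K ≤ η * W := by rw [div_le_iff₀ hηp] at hWK; linarith
  have hTp : 0 < W + R := by linarith
  have h8 : 2 * k * B ≤ e / 2 * W := by
    have : 2 * k * B ≤ 2 * k * (2 * η * W) := by
      apply mul_le_mul_of_nonneg_left _ (by positivity); linarith
    refine this.trans (le_of_eq ?_)
    rw [hη]; field_simp; norm_num
  have h9 : R ≤ 2 * k * B := by nlinarith
  have h10 : (W + 2 * k * B) / (W + R) - 1 = (2 * k * B - R) / (W + R) := by field_simp; ring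
  rw [Real.dist_eq, h10, abs_of_nonneg (div_nonneg (by linarith) hTp.le), div_lt_iff₀ hTp]
  nlinarith [mul_pos he hWp, mul_nonneg he.le hR0]
end

section
/- (Lemma 6.11 in explicit form.) If S is unbounded (F̄(x) > 0 for all x > 0) and the tail of S has upper Matuszewska index less than −2, expressed via the equivalent Potter-type bound — there exist constants C > 0, ε > 0 and x₀ > 0 such that F̄(γx) ≤ C·γ^{−(2+ε)}·F̄(x) for all x ≥ x₀ and all γ ≥ 1 — then the residence-type component of the FB mean response time is negligible in heavy traffic: lim_{λ → (1/m)⁻} (∫₀^∞ R̄_λ(x)·f(x) dx) / T̄^FB(λ) = 0. -/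
open MeasureTheory Filter

/-- Truncated relevant load for FB, `ρ_{x̄} = λ ∫₀^∞ min(t,x) f(t) dt`. -/
noncomputable def rhoBar (f : ℝ → ℝ) (lam x : ℝ) : ℝ :=
  lam * ∫ t in Set.Ioi (0:ℝ), min t x * f t

/-- Waiting-type component of the FB-1 mean response time of a size-`x` job,
`W̄_λ(x) = λ (∫₀^∞ min(t,x)² f(t) dt) / (2(1−ρ_{x̄})²)`. -/
noncomputable def WbarFB (f : ℝ → ℝ) (lam x : ℝ) : ℝ :=
  lam * (∫ t in Set.Ioi (0:ℝ), (min t x) ^ 2 * f t) / (2 * (1 - rhoBar f lam x) ^ 2)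

/-- Residence-type component of the FB-1 mean response time of a size-`x` job,
`R̄_λ(x) = x/(1−ρ_{x̄})`. -/
noncomputable def RbarFB (f : ℝ → ℝ) (lam x : ℝ) : ℝ :=
  x / (1 - rhoBar f lam x)

/-- Overall FB-1 mean response time, `T̄^FB(λ) = ∫₀^∞ (W̄_λ(x)+R̄_λ(x)) f(x) dx`. -/
noncomputable def TfbMean (f : ℝ → ℝ) (lam : ℝ) : ℝ :=
  ∫ x in Set.Ioi (0:ℝ), (WbarFB f lam x + RbarFB f lam x) * f x

section aux
variable {μ : Measure ℝ} [IsProbabilityMeasure μ]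

set_option maxHeartbeats 4000000 in
lemma aux_abstract (hpos : ∀ᵐ t ∂μ, 0 < t) (h2 : Integrable (fun t => t ^ 2) μ)
    (h1 : Integrable (fun t => t) μ)
    (hunb : ∀ x > (0:ℝ), 0 < μ.real (Set.Ioi x)) (m : ℝ) (hm : m = ∫ t, t ∂μ) (hm0 : 0 < m)
    (H B : ℝ → ℝ) (hH : H = fun x => ∫ t, min t x ∂μ) (hB : B = fun x => ∫ t, (min t x) ^ 2 ∂μ) :
    Tendsto (fun lam => (∫ x, x / (1 - lam * H x) ∂μ) /
      (∫ x, (lam * B x / (2 * (1 - lam * H x) ^ 2) + x / (1 - lam * H x)) ∂μ))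
      (nhdsWithin (1/m) (Set.Iio (1/m))) (nhds 0) := by
  have hminI : ∀ x, Integrable (fun t => min t x) μ := fun x => h1.inf (integrable_const x)
  have hHmono : Monotone H := by
    intro x y hxy
    rw [hH]
    exact integral_mono (hminI x) (hminI y) (fun t => min_le_min_left t hxy)
  have hHm : ∀ x, H x ≤ m := by
    intro x
    rw [hH, hm]
    exact integral_mono (hminI x) h1 (fun t => min_le_left t x)
  have hHlt : ∀ x > 0, H x < m := by
    intro x hx
    have h := hunb (x+1) (by linarith)
    have h' : ∫ t, (Set.Ioi (x+1)).indicator (fun _ => (1:ℝ)) t ∂μ ≤ ∫ t, (t - min t x) ∂μ := by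
      refine integral_mono ((integrable_const _).indicator measurableSet_Ioi) (h1.sub (hminI x)) ?_
      intro t
      by_cases ht : t ∈ Set.Ioi (x+1)
      · simp only [Set.indicator_of_mem ht]
        have : x + 1 < t := ht
        rw [min_eq_right (by linarith)]; linarith
      · simp only [Set.indicator_of_notMem ht]
        linarith [min_le_left t x]
    rw [integral_indicator_const _ measurableSet_Ioi, integral_sub h1 (hminI x), ← hm] at h'
    have : H x = ∫ t, min t x ∂μ := by rw [hH]
    rw [← this] at h'
    simp at h'
    linarith
  have hmin2I : ∀ x ≥ 0, Integrable (fun t => (min t x)^2) μ := by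
    intro x hx
    refine h2.mono' (by fun_prop) ?_
    filter_upwards [hpos] with t ht
    rw [Real.norm_of_nonneg (by positivity)]
    have : 0 ≤ min t x := le_min ht.le hx
    exact pow_le_pow_left₀ this (min_le_left _ _) 2
  have hBmono : ∀ x y, 0 ≤ x → x ≤ y → B x ≤ B y := by
    intro x y hx hxy
    rw [hB]
    refine integral_mono_ae (hmin2I x hx) (hmin2I y (hx.trans hxy)) ?_
    filter_upwards [hpos] with t ht
    exact pow_le_pow_left₀ (le_min ht.le hx) (min_le_min_left t hxy) 2
  have hB0 : ∀ x, 0 ≤ B x := by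
    intro x; rw [hB]; exact integral_nonneg (fun t => sq_nonneg _)
  set M := ∫ t, t^2 ∂μ with hM
  have hBM : ∀ x ≥ 0, B x ≤ M := by
    intro x hx
    rw [hB]
    refine integral_mono_ae (hmin2I x hx) h2 ?_
    filter_upwards [hpos] with t ht
    exact pow_le_pow_left₀ (le_min ht.le hx) (min_le_left _ _) 2
  have hB1 : μ.real (Set.Ioi 1) ≤ B 1 := by
    have h' : ∫ t, (Set.Ioi (1:ℝ)).indicator (fun _ => (1:ℝ)) t ∂μ ≤ ∫ t, (min t 1)^2 ∂μ := by
      refine integral_mono ((integrable_const _).indicator measurableSet_Ioi)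
        (hmin2I 1 zero_le_one) ?_
      intro t
      by_cases ht : t ∈ Set.Ioi (1:ℝ)
      · simp only [Set.indicator_of_mem ht]
        have : 1 < t := ht
        rw [min_eq_right (by linarith)]; norm_num
      · simp only [Set.indicator_of_notMem ht]
        positivity
    rw [integral_indicator_const _ measurableSet_Ioi] at h'
    rw [hB]
    simpa using h'
  have hF1 := hunb 1 one_pos
  -- V and G
  set V : ℝ → ℝ := fun x => ∫ t in Set.Ioi x, t^2 ∂μ with hV
  set G : ℝ → ℝ := fun x => ∫ t in Set.Ioi x, t ∂μ with hG
  have hVlim : Tendsto V atTop (nhds 0) := by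
    have h := tendsto_setIntegral_of_antitone (μ := μ) (f := fun t : ℝ => t^2)
      (s := fun x : ℝ => Set.Ioi x) (fun _ => measurableSet_Ioi)
      (fun x y hxy => Set.Ioi_subset_Ioi hxy) ⟨0, h2.integrableOn⟩
    have e : ⋂ n : ℝ, Set.Ioi n = ∅ := by
      ext t; simp only [Set.mem_iInter, Set.mem_Ioi, Set.mem_empty_iff_false, iff_false]
      push Not
      exact ⟨t, le_rfl⟩
    rw [e] at h
    simpa using h
  have hHG : ∀ x > 0, m - H x ≤ G x := by
    intro x hx
    have : m - H x = ∫ t, (t - min t x) ∂μ := by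
      rw [integral_sub h1 (hminI x), hm, hH]
    rw [this]
    change _ ≤ ∫ t in Set.Ioi x, t ∂μ
    rw [← integral_indicator measurableSet_Ioi]
    refine integral_mono (h1.sub (hminI x)) (h1.indicator measurableSet_Ioi) ?_
    intro t
    by_cases ht : t ∈ Set.Ioi x
    · simp only [Set.indicator_of_mem ht]
      have : x < t := ht
      rw [min_eq_right this.le]; linarith
    · simp only [Set.indicator_of_notMem ht]
      rw [min_eq_left (not_lt.1 ht)]; simp
  have hxG : ∀ x > 0, x * G x ≤ V x := by
    intro x hx
    rw [hG, hV]
    simp only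
    rw [← integral_const_mul]
    refine setIntegral_mono_on (h1.const_mul x).integrableOn h2.integrableOn measurableSet_Ioi ?_
    intro t ht
    have : x < t := ht
    nlinarith
  have hG0 : ∀ x > 0, 0 ≤ G x := by
    intro x hx
    exact setIntegral_nonneg measurableSet_Ioi (fun t ht => hx.le.trans (le_of_lt ht))
  have hV0 : ∀ x, 0 ≤ V x := fun x => integral_nonneg (fun t => sq_nonneg _)
  have hCS : ∀ x, G x ^ 2 ≤ V x * μ.real (Set.Ioi x) := by
    intro x
    have hq : ∀ q : ℝ, 0 ≤ V x * (q * q) + (-2 * G x) * q + μ.real (Set.Ioi x) := by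
      intro q
      have h0 : 0 ≤ ∫ t in Set.Ioi x, (q * t - 1)^2 ∂μ := integral_nonneg (fun t => sq_nonneg _)
      have e : (fun t : ℝ => (q * t - 1)^2) = fun t => ((q*q) * t^2 + (-2*q) * t) + 1 := by
        ext t; ring
      have i2 : IntegrableOn (fun t : ℝ => (q*q) * t^2) (Set.Ioi x) μ := (h2.const_mul _).integrableOn
      have i1 : IntegrableOn (fun t : ℝ => (-2*q) * t) (Set.Ioi x) μ := (h1.const_mul _).integrableOn
      have i12 : IntegrableOn (fun t : ℝ => (q*q) * t^2 + (-2*q) * t) (Set.Ioi x) μ := i2.add i1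
      rw [e, integral_add i12 (integrable_const _), integral_add i2 i1,
        integral_const_mul, integral_const_mul] at h0
      simp only [integral_const, measureReal_restrict_apply_univ, smul_eq_mul, mul_one] at h0
      have : V x * (q * q) = (q*q) * ∫ t in Set.Ioi x, t^2 ∂μ := by rw [hV]; ring
      have : (-2 * G x) * q = (-2*q) * ∫ t in Set.Ioi x, t ∂μ := by rw [hG]; ring
      linarith
    have := discrim_le_zero hq
    unfold discrim at this
    nlinarith
  -- the constant
  set c := μ.real (Set.Ioi 1) / (4 * m) with hc
  have hc0 : 0 < c := by positivity
  have hHmeas : Measurable H := hHmono.measurable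
  have hBmeas : AEMeasurable B μ := by
    have hm' : Measurable (fun x => B (max x 0)) := by
      apply Monotone.measurable
      intro x y hxy
      exact hBmono _ _ (le_max_right _ _) (max_le_max_right 0 hxy)
    refine ⟨_, hm', ?_⟩
    filter_upwards [hpos] with t ht
    simp [max_eq_left ht.le]
  -- facts for fixed lam
  have hA : ∀ lam, 0 < lam → lam < 1/m → ∀ x, 0 < 1 - lam * m ∧ 1 - lam * m ≤ 1 - lam * H x := by
    intro lam hl hl' x
    rw [lt_div_iff₀ hm0] at hl'
    have := mul_le_mul_of_nonneg_left (hHm x) hl.le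
    constructor <;> linarith
  have hWI : ∀ lam, 0 < lam → lam < 1/m →
      Integrable (fun x => lam * B x / (2 * (1 - lam * H x) ^ 2)) μ := by
    intro lam hl hl'
    refine Integrable.mono' (integrable_const (lam * M / (2 * (1 - lam * m)^2))) ?_ ?_
    · refine AEMeasurable.aestronglyMeasurable ?_
      exact (hBmeas.const_mul lam).div (Measurable.aemeasurable (by fun_prop))
    · filter_upwards [hpos] with x hx
      obtain ⟨a1, a2⟩ := hA lam hl hl' x
      rw [Real.norm_of_nonneg (by have := hB0 x; positivity)]
      have := hB0 x
      have := hBM x hx.le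
      gcongr
  have hRI : ∀ lam, 0 < lam → lam < 1/m → Integrable (fun x => x / (1 - lam * H x)) μ := by
    intro lam hl hl'
    refine Integrable.mono' (h1.div_const (1 - lam * m)) ?_ ?_
    · exact Measurable.aestronglyMeasurable (by fun_prop)
    · filter_upwards [hpos] with x hx
      obtain ⟨a1, a2⟩ := hA lam hl hl' x
      rw [Real.norm_of_nonneg (by have := a1.trans_le a2; positivity)]
      gcongr
  have hWlow : ∀ lam, 1/(2*m) < lam → lam < 1/m → ∀ x, 1 ≤ x →
      c / (1 - lam * H x)^2 ≤ lam * B x / (2 * (1 - lam * H x) ^ 2) := by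
    intro lam hl hl' x hx
    have hl0 : 0 < lam := lt_trans (by positivity) hl
    obtain ⟨a1, a2⟩ := hA lam hl0 hl' x
    have a3 := a1.trans_le a2
    have hb : μ.real (Set.Ioi 1) ≤ B x := hB1.trans (hBmono 1 x zero_le_one hx)
    have : 2 * c ≤ lam * B x := by
      calc 2 * c = 1/(2*m) * μ.real (Set.Ioi 1) := by rw [hc]; field_simp; norm_num
        _ ≤ lam * B x := by gcongr
    rw [div_le_div_iff₀ (by positivity) (by positivity)]
    nlinarith [sq_nonneg (1 - lam * H x)]
  have hev : ∀ᶠ lam in nhdsWithin (1/m) (Set.Iio (1/m)), 1/(2*m) < lam ∧ lam < 1/m := by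
    have h1' : 1/(2*m) < 1/m := by
      apply one_div_lt_one_div_of_lt hm0; linarith
    filter_upwards [Ioo_mem_nhdsLT h1'] with lam h
    exact h
  have hev2 : ∀ e > 0, ∀ᶠ lam in nhdsWithin (1/m) (Set.Iio (1/m)), 1 - lam * m < e := by
    intro e he
    have ht : Tendsto (fun lam : ℝ => 1 - lam * m) (nhdsWithin (1/m) (Set.Iio (1/m))) (nhds 0) := by
      have : Continuous (fun lam : ℝ => 1 - lam * m) := by fun_prop
      have h := (this.tendsto (1/m)).mono_left (nhdsWithin_le_nhds (s := Set.Iio (1/m)))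
      have e0 : 1 - 1/m*m = 0 := by field_simp; norm_num
      rwa [e0] at h
    exact ht.eventually (gt_mem_nhds he)
  -- W integral blows up
  have hWinf : ∀ N : ℝ, 0 < N → ∀ᶠ lam in nhdsWithin (1/m) (Set.Iio (1/m)),
      N ≤ ∫ x, lam * B x / (2 * (1 - lam * H x) ^ 2) ∂μ := by
    intro N hN
    set v := c * m^2 / (4 * N) with hv
    have hv0 : 0 < v := by positivity
    obtain ⟨x, hx1, hxV⟩ := ((eventually_ge_atTop (1:ℝ)).and (hVlim.eventually (gt_mem_nhds hv0))).exists
    have hx0 : 0 < x := by linarith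
    have hF := hunb x hx0
    have he : 0 < Real.sqrt (v * μ.real (Set.Ioi x)) / m := by positivity
    filter_upwards [hev, hev2 _ he] with lam ⟨hl, hl'⟩ hle
    have hl0 : 0 < lam := lt_trans (by positivity) hl
    obtain ⟨a1, a2⟩ := hA lam hl0 hl' x
    have a3 := a1.trans_le a2
    have hsq : Real.sqrt (v * μ.real (Set.Ioi x))^2 = v * μ.real (Set.Ioi x) :=
      Real.sq_sqrt (by positivity)
    set s := Real.sqrt (v * μ.real (Set.Ioi x)) with hs
    have hs0 : 0 ≤ s := Real.sqrt_nonneg _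
    have hGs : G x ≤ s := by
      apply Real.le_sqrt_of_sq_le
      exact (hCS x).trans (by gcongr)
    have hAs : 1 - lam * H x ≤ 2 * s / m := by
      have : lam * (m - H x) ≤ 1/m * s := by
        have := hHlt x hx0
        have := hHG x hx0
        exact mul_le_mul hl'.le (by linarith) (by linarith) (by positivity)
      have e : 2 * s / m = s/m + 1/m*s := by ring
      linarith
    have key : ∫ y, (Set.Ioi x).indicator (fun _ => c / (1 - lam * H x)^2) y ∂μ ≤
        ∫ y, lam * B y / (2 * (1 - lam * H y) ^ 2) ∂μ := by
      refine integral_mono ((integrable_const _).indicator measurableSet_Ioi) (hWI lam hl0 hl') ?_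
      intro y
      obtain ⟨b1, b2⟩ := hA lam hl0 hl' y
      have b3 := b1.trans_le b2
      by_cases hy : y ∈ Set.Ioi x
      · simp only [Set.indicator_of_mem hy]
        have hy' : x < y := hy
        refine le_trans ?_ (hWlow lam hl hl' y (by linarith))
        have := hHmono hy'.le
        gcongr
      · simp only [Set.indicator_of_notMem hy]
        have := hB0 y
        positivity
    rw [integral_indicator_const _ measurableSet_Ioi, smul_eq_mul] at key
    refine le_trans ?_ key
    rw [mul_div_assoc', le_div_iff₀ (by positivity)]
    calc N * (1 - lam * H x)^2 ≤ N * (2 * s / m)^2 := by gcongr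
      _ = N * 4 * s^2 / m^2 := by ring
      _ = μ.real (Set.Ioi x) * c := by rw [hsq, hv]; field_simp
      _ ≤ _ := le_rfl
  -- main
  rw [Metric.tendsto_nhds]
  intro η' hη'
  set η := η' / 2 with hη
  have hη0 : 0 < η := by positivity
  set δ := c * η / 4 with hδ
  have hδ0 : 0 < δ := by positivity
  have hVev : ∀ᶠ x in atTop, V x < δ * m := hVlim.eventually (gt_mem_nhds (by positivity))
  obtain ⟨X, hX1, hXV⟩ := ((eventually_ge_atTop (1:ℝ)).and (eventually_forall_ge_atTop.2 hVev)).exists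
  have hX0 : 0 < X := by linarith
  set K := 2 * m * X / (m - H X) with hK
  have hmX : 0 < m - H X := by linarith [hHlt X hX0]
  have hK0 : 0 < K := by positivity
  have hM0 : 0 ≤ M := integral_nonneg (fun t => sq_nonneg _)
  have hN : 0 < (K + M / δ) / (η/2) := by positivity
  filter_upwards [hev, hWinf _ hN] with lam ⟨hl, hl'⟩ hW
  have hl0 : 0 < lam := lt_trans (by positivity) hl
  have hpt : ∀ x, 0 < x → x / (1 - lam * H x) ≤
      (K + x^2 / δ) + (η/2) * (lam * B x / (2 * (1 - lam * H x) ^ 2)) := by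
    intro x hx
    obtain ⟨a1, a2⟩ := hA lam hl0 hl' x
    have a3 := a1.trans_le a2
    have hBx := hB0 x
    have t1 : 0 ≤ x^2 / δ := by positivity
    have t2 : 0 ≤ (η/2) * (lam * B x / (2 * (1 - lam * H x) ^ 2)) := by positivity
    rcases le_total x X with hxX | hxX
    · have : x / (1 - lam * H x) ≤ K := by
        have hAl : (m - H X) / (2 * m) ≤ 1 - lam * H x := by
          have h3 : 1/(2*m) * (m - H X) ≤ lam * (m - H x) := by
            have := hHmono hxX
            gcongr
          have : (m - H X) / (2 * m) = 1/(2*m) * (m - H X) := by ring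
          linarith
        calc x / (1 - lam * H x) ≤ X / ((m - H X) / (2 * m)) := by gcongr
          _ = K := by rw [hK]; field_simp
      linarith
    · rcases le_total (x * (1 - lam * m)) δ with hd | hd
      · have hg : x * (lam * (m - H x)) ≤ δ := by
          have q1 : x * (m - H x) ≤ δ * m :=
            (mul_le_mul_of_nonneg_left (hHG x hx) hx.le).trans ((hxG x hx).trans (hXV x hxX).le)
          have q2 : lam * (x * (m - H x)) ≤ lam * (δ * m) := by gcongr
          have q3 : lam * m ≤ 1 := by linarith
          have q4 : lam * m * δ ≤ 1 * δ := by gcongr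
          linarith
        have hxA : x * (1 - lam * H x) ≤ 2 * δ := by
          have : x * (1 - lam * H x) = x * (1 - lam * m) + x * (lam * (m - H x)) := by ring
          linarith
        have hw := hWlow lam hl hl' x (by linarith)
        have : x / (1 - lam * H x) ≤ (η/2) * (c / (1 - lam * H x)^2) := by
          rw [mul_div_assoc', div_le_div_iff₀ a3 (by positivity)]
          calc x * (1 - lam * H x)^2 = (x * (1 - lam * H x)) * (1 - lam * H x) := by ring
            _ ≤ (2 * δ) * (1 - lam * H x) := by gcongr
            _ = _ := by rw [hδ]; ring
        have : (η/2) * (c / (1 - lam * H x)^2) ≤ (η/2) * (lam * B x / (2 * (1 - lam * H x) ^ 2)) := by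
          gcongr
        linarith
      · have : x / (1 - lam * H x) ≤ x^2 / δ := by
          rw [div_le_div_iff₀ a3 hδ0]
          have q1 : x * (1 - lam * m) ≤ x * (1 - lam * H x) := by gcongr
          calc x * δ ≤ x * (x * (1 - lam * H x)) := by gcongr; exact hd.trans q1
            _ = _ := by ring
        linarith
  have hR0 : 0 ≤ ∫ x, x / (1 - lam * H x) ∂μ := by
    apply integral_nonneg_of_ae
    filter_upwards [hpos] with x hx
    obtain ⟨a1, a2⟩ := hA lam hl0 hl' x
    have a3 := a1.trans_le a2
    simp only [Pi.zero_apply]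
    positivity
  have hRle : ∫ x, x / (1 - lam * H x) ∂μ ≤
      (K + M / δ) + (η/2) * ∫ x, lam * B x / (2 * (1 - lam * H x) ^ 2) ∂μ := by
    have hi2 : Integrable (fun x : ℝ => K + x^2 / δ) μ := (integrable_const K).add (h2.div_const δ)
    have := integral_mono_ae (hRI lam hl0 hl') (hi2.add ((hWI lam hl0 hl').const_mul (η/2)))
      (by filter_upwards [hpos] with x hx; exact hpt x hx)
    simp only [Pi.add_apply] at this
    rw [integral_add hi2 ((hWI lam hl0 hl').const_mul (η/2)), integral_const_mul,
      integral_add (integrable_const K) (h2.div_const δ)] at this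
    have e1 : ∫ a, a ^ 2 / δ ∂μ = M / δ := integral_div δ _
    have e2 : ∫ _a : ℝ, K ∂μ = K := by simp
    rwa [e1, e2] at this
  rw [integral_add (hWI lam hl0 hl') (hRI lam hl0 hl')]
  set R := ∫ x, x / (1 - lam * H x) ∂μ
  set W := ∫ x, lam * B x / (2 * (1 - lam * H x) ^ 2) ∂μ
  have hW0 : 0 < W := hN.trans_le hW
  rw [div_le_iff₀ (by positivity)] at hW
  rw [Real.dist_eq, sub_zero, abs_of_nonneg (by positivity)]
  rw [div_lt_iff₀ (by positivity)]
  have e1 : η' = 2 * η := by rw [hη]; ring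
  rw [e1]
  linarith [mul_nonneg hη0.le hR0, mul_pos hη0 hW0]

end aux

lemma aux_second_moment {μ : Measure ℝ} [IsProbabilityMeasure μ] (hpos : ∀ᵐ t ∂μ, 0 < t)
    (K ε x₀ : ℝ) (hε : 0 < ε) (hx₀ : 0 < x₀)
    (hb : ∀ t ≥ x₀, μ.real (Set.Ioi t) ≤ K * t ^ (-(2 + ε))) :
    Integrable (fun t => t ^ 2) μ := by
  refine ⟨by fun_prop, ?_⟩
  have h := lintegral_rpow_eq_lintegral_meas_lt_mul μ (f := fun t : ℝ => t)
    (by filter_upwards [hpos] with t ht; exact ht.le) aemeasurable_id (p := 2) two_pos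
  have e : ∫⁻ t, ‖t^2‖ₑ ∂μ = ∫⁻ t, ENNReal.ofReal (t ^ (2:ℝ)) ∂μ := by
    refine lintegral_congr (fun t => ?_)
    rw [Real.enorm_of_nonneg (sq_nonneg t)]
    norm_num
  rw [HasFiniteIntegral, e, h]
  refine ENNReal.mul_lt_top ENNReal.ofReal_lt_top ?_
  rw [← Set.Ioc_union_Ioi_eq_Ioi hx₀.le]
  refine (lintegral_union_le _ _ _).trans_lt ?_
  refine ENNReal.add_lt_top.2 ⟨?_, ?_⟩
  · have : ∫⁻ t in Set.Ioc 0 x₀, μ {a | t < a} * ENNReal.ofReal (t ^ ((2:ℝ)-1)) ≤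
        ∫⁻ t in Set.Ioc 0 x₀, ENNReal.ofReal x₀ := by
      refine setLIntegral_mono measurable_const ?_
      intro t ht
      calc μ {a | t < a} * ENNReal.ofReal (t ^ ((2:ℝ)-1)) ≤ 1 * ENNReal.ofReal x₀ := by
            gcongr
            · exact prob_le_one
            · norm_num; exact ht.2
        _ = _ := one_mul _
    refine this.trans_lt ?_
    rw [setLIntegral_const]
    exact ENNReal.mul_lt_top ENNReal.ofReal_lt_top (by simp)
  · have hi := ((integrableOn_Ioi_rpow_of_lt (a := -(1+ε)) (by linarith) hx₀).const_mul K)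
    have := hi.lintegral_lt_top
    refine lt_of_le_of_lt ?_ this
    refine setLIntegral_mono (by fun_prop) ?_
    intro t ht
    have ht' : x₀ < t := ht
    have ht0 : 0 < t := hx₀.trans ht'
    have h1 := hb t ht'.le
    have : μ {a | t < a} = ENNReal.ofReal (μ.real (Set.Ioi t)) := by
      rw [ofReal_measureReal]; rfl
    rw [this, ← ENNReal.ofReal_mul measureReal_nonneg]
    apply ENNReal.ofReal_le_ofReal
    calc μ.real (Set.Ioi t) * t ^ ((2:ℝ)-1) ≤ (K * t ^ (-(2 + ε))) * t ^ ((2:ℝ)-1) := by gcongr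
      _ = K * t ^ (-(1+ε)) := by
        rw [mul_assoc, ← Real.rpow_add ht0]; congr 2; ring

/-- **Lemma 6.11.** If `S` is unbounded with tail of upper Matuszewska index
less than `−2` (Potter-type bound), then the residence-type component of the
FB mean response time is negligible in heavy traffic:
`lim_{λ → (1/m)⁻} (∫₀^∞ R̄_λ(x) f(x) dx) / T̄^FB(λ) = 0`. -/
theorem fb_residence_negligible
    (f : ℝ → ℝ) (m : ℝ)
    (hf_meas : Measurable f)
    (hf_nonneg : ∀ x, 0 ≤ f x)
    (hf_zero : ∀ x ≤ 0, f x = 0)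
    (hf_prob : ∫ t in Set.Ioi (0:ℝ), f t = 1)
    (hm_int : Integrable (fun t => t * f t) (volume.restrict (Set.Ioi 0)))
    (hm_def : m = ∫ t in Set.Ioi (0:ℝ), t * f t)
    (hm_pos : 0 < m)
    (hunbounded : ∀ x > (0:ℝ), 0 < tailS f x)
    (hmatuszewska : ∃ C > (0:ℝ), ∃ ε > (0:ℝ), ∃ x₀ > (0:ℝ),
      ∀ x ≥ x₀, ∀ γ ≥ (1:ℝ), tailS f (γ * x) ≤ C * γ ^ (-(2 + ε)) * tailS f x) :
    Tendsto (fun lam => (∫ x in Set.Ioi (0:ℝ), RbarFB f lam x * f x) / TfbMean f lam)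
      (nhdsWithin (1/m) (Set.Iio (1/m))) (nhds 0) := by
  obtain ⟨C, hC, ε, hε, x₀, hx₀, hP⟩ := hmatuszewska
  set ν := volume.restrict (Set.Ioi (0:ℝ)) with hν
  set μ : Measure ℝ := ν.withDensity (fun t => ENNReal.ofReal (f t)) with hμ
  have hfI : Integrable f ν := by
    by_contra h
    rw [integral_undef h] at hf_prob
    exact zero_ne_one hf_prob
  have hmo : Measurable (fun t => ENNReal.ofReal (f t)) := by fun_prop
  have hlt : ∀ᵐ t ∂ν, ENNReal.ofReal (f t) < ⊤ := by simp
  have hint : ∀ g : ℝ → ℝ, ∫ t, g t * f t ∂ν = ∫ t, g t ∂μ := by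
    intro g
    rw [hμ, integral_withDensity_eq_integral_toReal_smul hmo hlt]
    refine integral_congr_ae (Eventually.of_forall fun t => ?_)
    simp [ENNReal.toReal_ofReal (hf_nonneg t), mul_comm]
  have : IsProbabilityMeasure μ := by
    constructor
    rw [hμ, withDensity_apply _ MeasurableSet.univ, Measure.restrict_univ,
      ← ofReal_integral_eq_lintegral_ofReal hfI (Eventually.of_forall hf_nonneg), hf_prob]
    simp
  have hpos : ∀ᵐ t ∂μ, 0 < t := by
    have : ∀ᵐ t ∂ν, 0 < t := ae_restrict_mem measurableSet_Ioi
    exact (withDensity_absolutelyContinuous ν _).ae_le this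
  have htail : ∀ x > 0, μ.real (Set.Ioi x) = tailS f x := by
    intro x hx
    rw [Measure.real, hμ, withDensity_apply _ measurableSet_Ioi, tailS,
      hν, Measure.restrict_restrict measurableSet_Ioi, Set.inter_eq_left.2 (Set.Ioi_subset_Ioi hx.le),
      integral_eq_lintegral_of_nonneg_ae (Eventually.of_forall hf_nonneg)
        hf_meas.aestronglyMeasurable]
  have h1 : Integrable (fun t => t) μ := by
    rw [hμ, integrable_withDensity_iff hmo hlt]
    refine hm_int.congr (Eventually.of_forall fun t => ?_)
    simp [ENNReal.toReal_ofReal (hf_nonneg t)]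
  have h2 : Integrable (fun t => t ^ 2) μ := by
    refine aux_second_moment hpos (C * x₀ ^ (2 + ε) * tailS f x₀) ε x₀ hε hx₀ ?_
    intro t ht
    have ht0 : 0 < t := hx₀.trans_le ht
    have h := hP x₀ le_rfl (t / x₀) ((one_le_div hx₀).2 ht)
    rw [div_mul_cancel₀ _ hx₀.ne', Real.div_rpow ht0.le hx₀.le, Real.rpow_neg hx₀.le] at h
    rw [htail t ht0]
    refine h.trans (le_of_eq ?_)
    rw [div_inv_eq_mul]; ring
  have hmain := aux_abstract hpos h2 h1 (fun x hx => by rw [htail x hx]; exact hunbounded x hx)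
    m (by rw [hm_def, hint (fun t => t)]) hm_pos _ _ rfl rfl
  refine hmain.congr (fun lam => ?_)
  rw [← hint, ← hint]
  simp only [← hint, TfbMean, WbarFB, RbarFB, rhoBar, hν]
end

section
/- (Theorem 6.12 in explicit form.) Fix an integer k ≥ 1. If S is unbounded (F̄(x) > 0 for all x > 0) and the tail of S has upper Matuszewska index less than −2, expressed via the equivalent Potter-type bound — there exist constants C > 0, ε > 0 and x₀ > 0 such that F̄(γx) ≤ C·γ^{−(2+ε)}·F̄(x) for all x ≥ x₀ and all γ ≥ 1 — then the paper's explicit upper bound on the k-server FB mean response time is asymptotically tight against the single-server FB mean response time in heavy traffic: lim_{λ → (1/m)⁻} (∫₀^∞ (W̄_λ(x) + (2k−1)·R̄_λ(x))·f(x) dx) / T̄^FB(λ) = 1. -/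
open MeasureTheory Filter

section helpers
variable {f : ℝ → ℝ} {m : ℝ}

theorem hp_intf (hf_prob : ∫ t in Set.Ioi (0:ℝ), f t = 1) :
    IntegrableOn f (Set.Ioi 0) := by
  by_contra h
  rw [integral_undef h] at hf_prob
  norm_num at hf_prob

theorem hp_int_min (hf_meas : Measurable f) (hf_nonneg : ∀ x, 0 ≤ f x)
    (hm_int : IntegrableOn (fun t => t * f t) (Set.Ioi 0)) {x : ℝ} (hx : 0 ≤ x) :
    IntegrableOn (fun t => min t x * f t) (Set.Ioi 0) := by
  refine Integrable.mono' hm_int (by fun_prop) ?_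
  filter_upwards [ae_restrict_mem measurableSet_Ioi] with t ht
  have ht : 0 < t := ht
  have h0 : 0 ≤ min t x := le_min ht.le hx
  rw [Real.norm_of_nonneg (mul_nonneg h0 (hf_nonneg t))]
  exact mul_le_mul_of_nonneg_right (min_le_left _ _) (hf_nonneg t)

theorem hp_int_minsq (hf_meas : Measurable f) (hf_nonneg : ∀ x, 0 ≤ f x)
    (hm_int : IntegrableOn (fun t => t * f t) (Set.Ioi 0)) {x : ℝ} (hx : 0 ≤ x) :
    IntegrableOn (fun t => (min t x)^2 * f t) (Set.Ioi 0) := by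
  refine Integrable.mono' (hm_int.const_mul x) (by fun_prop) ?_
  filter_upwards [ae_restrict_mem measurableSet_Ioi] with t ht
  have ht : 0 < t := ht
  have h0 : 0 ≤ min t x := le_min ht.le hx
  rw [Real.norm_of_nonneg (mul_nonneg (sq_nonneg _) (hf_nonneg t)), ← mul_assoc]
  refine mul_le_mul_of_nonneg_right ?_ (hf_nonneg t)
  nlinarith [min_le_left t x, min_le_right t x]

theorem hp_minsq_le (hf_meas : Measurable f) (hf_nonneg : ∀ x, 0 ≤ f x)
    (hm_int : IntegrableOn (fun t => t * f t) (Set.Ioi 0)) {x : ℝ} (hx : 0 ≤ x) :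
    ∫ t in Set.Ioi (0:ℝ), (min t x)^2 * f t ≤ x * ∫ t in Set.Ioi (0:ℝ), t * f t := by
  rw [← integral_const_mul]
  refine setIntegral_mono_on (hp_int_minsq hf_meas hf_nonneg hm_int hx) (hm_int.const_mul x)
    measurableSet_Ioi ?_
  intro t ht
  have ht : 0 < t := ht
  have h0 : 0 ≤ min t x := le_min ht.le hx
  rw [← mul_assoc]
  refine mul_le_mul_of_nonneg_right ?_ (hf_nonneg t)
  nlinarith [min_le_left t x, min_le_right t x]

theorem hp_min_mono (hf_meas : Measurable f) (hf_nonneg : ∀ x, 0 ≤ f x)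
    (hm_int : IntegrableOn (fun t => t * f t) (Set.Ioi 0)) {x y : ℝ} (hx : 0 ≤ x) (hxy : x ≤ y) :
    ∫ t in Set.Ioi (0:ℝ), min t x * f t ≤ ∫ t in Set.Ioi (0:ℝ), min t y * f t := by
  refine setIntegral_mono_on (hp_int_min hf_meas hf_nonneg hm_int hx)
    (hp_int_min hf_meas hf_nonneg hm_int (hx.trans hxy)) measurableSet_Ioi ?_
  intro t ht
  exact mul_le_mul_of_nonneg_right (min_le_min le_rfl hxy) (hf_nonneg t)

theorem hp_minsq_mono (hf_meas : Measurable f) (hf_nonneg : ∀ x, 0 ≤ f x)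
    (hm_int : IntegrableOn (fun t => t * f t) (Set.Ioi 0)) {x y : ℝ} (hx : 0 ≤ x) (hxy : x ≤ y) :
    ∫ t in Set.Ioi (0:ℝ), (min t x)^2 * f t ≤ ∫ t in Set.Ioi (0:ℝ), (min t y)^2 * f t := by
  refine setIntegral_mono_on (hp_int_minsq hf_meas hf_nonneg hm_int hx)
    (hp_int_minsq hf_meas hf_nonneg hm_int (hx.trans hxy)) measurableSet_Ioi ?_
  intro t ht
  have ht : 0 < t := ht
  exact mul_le_mul_of_nonneg_right
    (pow_le_pow_left₀ (le_min ht.le hx) (min_le_min le_rfl hxy) 2) (hf_nonneg t)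

/-- second truncated moment is bounded below for x at least 1 -/
theorem hp_minsq_ge (hf_meas : Measurable f) (hf_nonneg : ∀ x, 0 ≤ f x)
    (hfi : IntegrableOn f (Set.Ioi 0))
    (hm_int : IntegrableOn (fun t => t * f t) (Set.Ioi 0)) {x : ℝ} (hx : 1 ≤ x) :
    tailS f 1 ≤ ∫ t in Set.Ioi (0:ℝ), (min t x)^2 * f t := by
  have hs : Set.Ioi (1:ℝ) ⊆ Set.Ioi 0 := Set.Ioi_subset_Ioi zero_le_one
  have h1 := hp_int_minsq hf_meas hf_nonneg hm_int (zero_le_one.trans hx)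
  refine le_trans ?_ (setIntegral_mono_set h1
    (Eventually.of_forall fun t => mul_nonneg (sq_nonneg _) (hf_nonneg t)) hs.eventuallyLE)
  refine setIntegral_mono_on (hfi.mono_set hs) (h1.mono_set hs) measurableSet_Ioi ?_
  intro t ht
  have ht : 1 < t := ht
  have : 1 ≤ min t x := le_min ht.le hx
  nlinarith [hf_nonneg t, mul_le_mul_of_nonneg_right (show 1 ≤ (min t x)^2 by nlinarith) (hf_nonneg t)]

/-- `∫ t f - ∫ min(t,x) f ≤ G(x)`. -/
theorem hp_min_ge (hf_meas : Measurable f) (hf_nonneg : ∀ x, 0 ≤ f x)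
    (hm_int : IntegrableOn (fun t => t * f t) (Set.Ioi 0)) {x : ℝ} (hx : 0 ≤ x) :
    ∫ t in Set.Ioi (0:ℝ), t * f t ≤ (∫ t in Set.Ioi (0:ℝ), min t x * f t) + Gt f x := by
  have hs : Set.Ioi x ⊆ Set.Ioi 0 := Set.Ioi_subset_Ioi hx
  have e : Gt f x = ∫ t in Set.Ioi (0:ℝ), (Set.Ioi x).indicator (fun t => t * f t) t := by
    rw [setIntegral_indicator measurableSet_Ioi, Set.inter_eq_self_of_subset_right hs]; rfl
  have i2 : IntegrableOn ((Set.Ioi x).indicator (fun t => t * f t)) (Set.Ioi 0) :=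
    hm_int.indicator measurableSet_Ioi
  have i1 := hp_int_min hf_meas hf_nonneg hm_int hx
  rw [e, ← integral_add i1 i2]
  refine setIntegral_mono_on hm_int (i1.add i2) measurableSet_Ioi ?_
  intro t ht
  have ht : 0 < t := ht
  by_cases h : x < t
  · rw [Set.indicator_of_mem (show t ∈ Set.Ioi x from h)]
    have := mul_nonneg (le_min ht.le hx) (hf_nonneg t)
    linarith
  · rw [Set.indicator_of_notMem (show t ∉ Set.Ioi x from h), min_eq_left (not_lt.1 h)]
    simp

theorem hp_min_le (hf_meas : Measurable f) (hf_nonneg : ∀ x, 0 ≤ f x)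
    (hm_int : IntegrableOn (fun t => t * f t) (Set.Ioi 0)) {x : ℝ} (hx : 0 ≤ x) :
    (∫ t in Set.Ioi (0:ℝ), min t x * f t) ≤ ∫ t in Set.Ioi (0:ℝ), t * f t := by
  refine setIntegral_mono_on (hp_int_min hf_meas hf_nonneg hm_int hx) hm_int measurableSet_Ioi ?_
  intro t ht
  exact mul_le_mul_of_nonneg_right (min_le_left _ _) (hf_nonneg t)

theorem hp_min_lt (hf_meas : Measurable f) (hf_nonneg : ∀ x, 0 ≤ f x)
    (hfi : IntegrableOn f (Set.Ioi 0))
    (hm_int : IntegrableOn (fun t => t * f t) (Set.Ioi 0))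
    (hunbounded : ∀ x > (0:ℝ), 0 < tailS f x) {x : ℝ} (hx : 0 < x) :
    (∫ t in Set.Ioi (0:ℝ), min t x * f t) < ∫ t in Set.Ioi (0:ℝ), t * f t := by
  have hs : Set.Ioi (2*x) ⊆ Set.Ioi 0 := Set.Ioi_subset_Ioi (by linarith)
  have e : tailS f (2*x) = ∫ t in Set.Ioi (0:ℝ), (Set.Ioi (2*x)).indicator f t := by
    rw [setIntegral_indicator measurableSet_Ioi, Set.inter_eq_self_of_subset_right hs]; rfl
  have i2 : IntegrableOn (fun t => x * (Set.Ioi (2*x)).indicator f t) (Set.Ioi 0) :=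
    (hfi.indicator measurableSet_Ioi).const_mul x
  have i1 := hp_int_min hf_meas hf_nonneg hm_int hx.le
  have hpos : 0 < x * tailS f (2*x) := mul_pos hx (hunbounded _ (by linarith))
  have : (∫ t in Set.Ioi (0:ℝ), min t x * f t) + x * tailS f (2*x)
      ≤ ∫ t in Set.Ioi (0:ℝ), t * f t := by
    rw [e, ← integral_const_mul, ← integral_add i1 i2]
    refine setIntegral_mono_on (i1.add i2) hm_int measurableSet_Ioi ?_
    intro t ht
    have ht : 0 < t := ht
    by_cases h : 2*x < t
    · rw [Set.indicator_of_mem (show t ∈ Set.Ioi (2*x) from h), min_eq_right (by linarith)]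
      nlinarith [hf_nonneg t, mul_nonneg (sub_nonneg.2 h.le) (hf_nonneg t)]
    · rw [Set.indicator_of_notMem (show t ∉ Set.Ioi (2*x) from h)]
      have := mul_le_mul_of_nonneg_right (min_le_left t x) (hf_nonneg t)
      linarith
  linarith

theorem hp_G_step (hf_nonneg : ∀ x, 0 ≤ f x)
    (hfi : IntegrableOn f (Set.Ioi 0))
    (hm_int : IntegrableOn (fun t => t * f t) (Set.Ioi 0)) {x : ℝ} (hx : 0 < x) :
    Gt f x ≤ 2 * x * tailS f x + Gt f (2 * x) := by
  have hs : Set.Ioi x ⊆ Set.Ioi 0 := Set.Ioi_subset_Ioi hx.le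
  have hs2 : Set.Ioi (2*x) ⊆ Set.Ioi x := Set.Ioi_subset_Ioi (by linarith)
  have e : Gt f (2*x) = ∫ t in Set.Ioi x, (Set.Ioi (2*x)).indicator (fun t => t * f t) t := by
    rw [setIntegral_indicator measurableSet_Ioi, Set.inter_eq_self_of_subset_right hs2]; rfl
  have i0 := hm_int.mono_set hs
  have i2 : IntegrableOn ((Set.Ioi (2*x)).indicator (fun t => t * f t)) (Set.Ioi x) :=
    i0.indicator measurableSet_Ioi
  have i1 : IntegrableOn (fun t => 2 * x * f t) (Set.Ioi x) := (hfi.mono_set hs).const_mul _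
  rw [e, tailS, ← integral_const_mul, ← integral_add i1 i2]
  refine setIntegral_mono_on i0 (i1.add i2) measurableSet_Ioi ?_
  intro t ht
  have ht : x < t := ht
  by_cases h : 2*x < t
  · rw [Set.indicator_of_mem (show t ∈ Set.Ioi (2*x) from h)]
    have := mul_nonneg hx.le (hf_nonneg t)
    linarith
  · rw [Set.indicator_of_notMem (show t ∉ Set.Ioi (2*x) from h)]
    have := mul_le_mul_of_nonneg_right (not_lt.1 h) (hf_nonneg t)
    linarith

theorem hp_G_tendsto 
    (hm_int : IntegrableOn (fun t => t * f t) (Set.Ioi 0)) {x : ℝ} (hx : 0 < x) :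
    Tendsto (fun n : ℕ => Gt f (2^n * x)) atTop (nhds 0) := by
  have h := intervalIntegral_tendsto_integral_Ioi (0:ℝ) hm_int (tendsto_id)
  have h2 : Tendsto (fun y => Gt f y) atTop (nhds 0) := by
    have h3 : Tendsto (fun y => (∫ t in Set.Ioi (0:ℝ), t * f t) - ∫ t in (0:ℝ)..y, t * f t)
        atTop (nhds 0) := by
      simpa using h.const_sub (∫ t in Set.Ioi (0:ℝ), t * f t)
    refine h3.congr' ?_
    filter_upwards [eventually_ge_atTop 0] with y hy
    rw [sub_eq_iff_eq_add', intervalIntegral.integral_of_le hy, Gt,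
      ← setIntegral_union (Set.Ioc_disjoint_Ioi le_rfl) measurableSet_Ioi
        (hm_int.mono_set Set.Ioc_subset_Ioi_self)
        (hm_int.mono_set (Set.Ioi_subset_Ioi hy)), Set.Ioc_union_Ioi_eq_Ioi hy]
  refine h2.comp ?_
  exact (tendsto_pow_atTop_atTop_of_one_lt (by norm_num : (1:ℝ) < 2)).atTop_mul_const hx

theorem hp_G_le (hf_nonneg : ∀ x, 0 ≤ f x)
    (hfi : IntegrableOn f (Set.Ioi 0))
    (hm_int : IntegrableOn (fun t => t * f t) (Set.Ioi 0))
    {C ε x₀ : ℝ} (hC : 0 < C) (hε : 0 < ε) (hx₀ : 0 < x₀)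
    (H : ∀ x ≥ x₀, ∀ γ ≥ (1:ℝ), tailS f (γ * x) ≤ C * γ ^ (-(2 + ε)) * tailS f x)
    {x : ℝ} (hx : x₀ ≤ x) : Gt f x ≤ 4 * C * (x * tailS f x) := by
  have hx0 : 0 < x := hx₀.trans_le hx
  have hT : 0 ≤ tailS f x := setIntegral_nonneg measurableSet_Ioi fun t _ => hf_nonneg t
  have key : ∀ n : ℕ, Gt f x ≤ 4 * C * (x * tailS f x) * (1 - (1/2)^n) + Gt f (2^n * x) := by
    intro n
    induction n with
    | zero => simp
    | succ n ih =>
      have h1 := hp_G_step hf_nonneg hfi hm_int (x := 2^n * x) (by positivity)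
      have hp : (1:ℝ) ≤ 2^n := one_le_pow₀ (by norm_num)
      have h2 := H x hx (2^n) hp
      have h3 : ((2:ℝ)^n) ^ (-(2+ε)) ≤ ((2:ℝ)^n) ^ (-2:ℝ) :=
        Real.rpow_le_rpow_of_exponent_le hp (by linarith)
      have h4 : ((2:ℝ)^n) ^ (-2:ℝ) = (1/2)^n * (1/2)^n := by
        rw [Real.rpow_neg (by positivity), Real.rpow_two, one_div, inv_pow, sq, mul_inv]
      have h5 : tailS f (2^n * x) ≤ C * ((1/2)^n * (1/2)^n) * tailS f x := by
        refine h2.trans ?_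
        rw [← h4]
        gcongr
      have h6 : (2:ℝ)^n * (1/2)^n = 1 := by rw [← mul_pow]; norm_num
      have h7 : 2 * (2^n * x) * tailS f (2^n * x) ≤ 2 * C * (x * tailS f x) * (1/2)^n := by
        calc _ ≤ 2 * (2^n * x) * (C * ((1/2)^n * (1/2)^n) * tailS f x) := by gcongr
          _ = 2 * C * (x * tailS f x) * (1/2)^n * (2^n * (1/2)^n) := by ring
          _ = _ := by rw [h6, mul_one]
      have e : (2:ℝ)^(n+1) * x = 2 * (2^n * x) := by ring
      rw [e, pow_succ]
      linarith
  have lim : Tendsto (fun n : ℕ => 4 * C * (x * tailS f x) * (1 - (1/2:ℝ)^n) + Gt f (2^n * x))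
      atTop (nhds (4 * C * (x * tailS f x) * (1 - 0) + 0)) := by
    refine Tendsto.add ?_ (hp_G_tendsto hm_int hx0)
    exact (((tendsto_pow_atTop_nhds_zero_of_lt_one (by norm_num) (by norm_num)).const_sub 1).const_mul _)
  have := ge_of_tendsto' lim key
  simpa using this

theorem hp_sq_tail (hf_nonneg : ∀ x, 0 ≤ f x)
    {C ε x₀ : ℝ} (hε : 0 < ε) (hx₀ : 0 < x₀)
    (H : ∀ x ≥ x₀, ∀ γ ≥ (1:ℝ), tailS f (γ * x) ≤ C * γ ^ (-(2 + ε)) * tailS f x) :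
    Tendsto (fun x => x^2 * tailS f x) atTop (nhds 0) := by
  have hg : Tendsto (fun x : ℝ => x₀^2 * C * tailS f x₀ * (x / x₀) ^ (-ε)) atTop (nhds 0) := by
    have := ((tendsto_rpow_neg_atTop hε).comp (tendsto_id.atTop_div_const hx₀)).const_mul
      (x₀^2 * C * tailS f x₀)
    simpa using this
  refine tendsto_of_tendsto_of_tendsto_of_le_of_le' tendsto_const_nhds hg ?_ ?_
  · exact Eventually.of_forall fun x => mul_nonneg (sq_nonneg _)
      (setIntegral_nonneg measurableSet_Ioi fun t _ => hf_nonneg t)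
  · filter_upwards [eventually_ge_atTop x₀] with x hx
    have hx0 : 0 < x := hx₀.trans_le hx
    have h := H x₀ le_rfl (x/x₀) ((one_le_div hx₀).2 hx)
    rw [div_mul_cancel₀ _ hx₀.ne', neg_add, Real.rpow_add (by positivity),
      Real.rpow_neg (by positivity), Real.rpow_two] at h
    calc x^2 * tailS f x ≤ x^2 * (C * (((x/x₀)^2)⁻¹ * (x/x₀)^(-ε)) * tailS f x₀) := by gcongr
      _ = _ := by field_simp

theorem hp_xG (hf_nonneg : ∀ x, 0 ≤ f x)
    (hfi : IntegrableOn f (Set.Ioi 0))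
    (hm_int : IntegrableOn (fun t => t * f t) (Set.Ioi 0))
    {C ε x₀ : ℝ} (hC : 0 < C) (hε : 0 < ε) (hx₀ : 0 < x₀)
    (H : ∀ x ≥ x₀, ∀ γ ≥ (1:ℝ), tailS f (γ * x) ≤ C * γ ^ (-(2 + ε)) * tailS f x) :
    Tendsto (fun x => x * Gt f x) atTop (nhds 0) := by
  have h := (hp_sq_tail hf_nonneg hε hx₀ H).const_mul (4 * C)
  rw [mul_zero] at h
  refine tendsto_of_tendsto_of_tendsto_of_le_of_le' tendsto_const_nhds h ?_ ?_
  · filter_upwards [eventually_ge_atTop 0] with x hx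
    refine mul_nonneg hx (setIntegral_nonneg measurableSet_Ioi fun t ht => ?_)
    exact mul_nonneg (hx.trans (le_of_lt ht)) (hf_nonneg t)
  · filter_upwards [eventually_ge_atTop x₀] with x hx
    have := mul_le_mul_of_nonneg_left (hp_G_le hf_nonneg hfi hm_int hC hε hx₀ H hx)
      (hx₀.le.trans hx)
    linarith

end helpers

section helpers2
variable {f : ℝ → ℝ} {m lam : ℝ}

theorem hq_lb (hf_meas : Measurable f) (hf_nonneg : ∀ x, 0 ≤ f x)
    (hm_int : IntegrableOn (fun t => t * f t) (Set.Ioi 0))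
    (hm_def : m = ∫ t in Set.Ioi (0:ℝ), t * f t) (hl : 0 < lam) {x : ℝ} (hx : 0 ≤ x) :
    1 - lam * m ≤ 1 - rhoBar f lam x := by
  have := mul_le_mul_of_nonneg_left (hp_min_le hf_meas hf_nonneg hm_int hx) hl.le
  rw [← hm_def] at this
  unfold rhoBar; linarith

theorem hq_anti (hf_meas : Measurable f) (hf_nonneg : ∀ x, 0 ≤ f x)
    (hm_int : IntegrableOn (fun t => t * f t) (Set.Ioi 0))
    (hl : 0 < lam) {x y : ℝ} (hx : 0 ≤ x) (hxy : x ≤ y) :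
    1 - rhoBar f lam y ≤ 1 - rhoBar f lam x := by
  have := mul_le_mul_of_nonneg_left (hp_min_mono hf_meas hf_nonneg hm_int hx hxy) hl.le
  unfold rhoBar; linarith

theorem hq_ub (hf_meas : Measurable f) (hf_nonneg : ∀ x, 0 ≤ f x)
    (hm_int : IntegrableOn (fun t => t * f t) (Set.Ioi 0))
    (hm_def : m = ∫ t in Set.Ioi (0:ℝ), t * f t) (hl : 0 < lam) {x : ℝ} (hx : 0 ≤ x) :
    1 - rhoBar f lam x ≤ 1 - lam * m + lam * Gt f x := by
  have := mul_le_mul_of_nonneg_left (hp_min_ge hf_meas hf_nonneg hm_int hx) hl.le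
  rw [← hm_def] at this
  unfold rhoBar; linarith

theorem hq_W_nonneg (hf_nonneg : ∀ x, 0 ≤ f x) (hl : 0 < lam) (x : ℝ) :
    0 ≤ WbarFB f lam x := by
  unfold WbarFB
  have : 0 ≤ ∫ t in Set.Ioi (0:ℝ), (min t x) ^ 2 * f t :=
    setIntegral_nonneg measurableSet_Ioi fun t _ => mul_nonneg (sq_nonneg _) (hf_nonneg t)
  positivity

theorem hq_W_ge (hf_meas : Measurable f) (hf_nonneg : ∀ x, 0 ≤ f x)
    (hfi : IntegrableOn f (Set.Ioi 0))
    (hm_int : IntegrableOn (fun t => t * f t) (Set.Ioi 0))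
    (hl : 0 < lam) {x : ℝ} (hx : 1 ≤ x) :
    (lam * tailS f 1 / 2) / (1 - rhoBar f lam x)^2 ≤ WbarFB f lam x := by
  unfold WbarFB
  rw [div_div]
  have := hp_minsq_ge hf_meas hf_nonneg hfi hm_int hx
  gcongr

theorem hq_W_int (hf_meas : Measurable f) (hf_nonneg : ∀ x, 0 ≤ f x)
    (hm_int : IntegrableOn (fun t => t * f t) (Set.Ioi 0))
    (hm_def : m = ∫ t in Set.Ioi (0:ℝ), t * f t) (hl : 0 < lam) (hs : 0 < 1 - lam * m) :
    IntegrableOn (fun x => WbarFB f lam x * f x) (Set.Ioi 0) := by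
  have hmono : MonotoneOn (WbarFB f lam) (Set.Ioi 0) := by
    intro x hx y hy hxy
    have hx : 0 < x := hx
    unfold WbarFB
    have h1 := hp_minsq_mono hf_meas hf_nonneg hm_int hx.le hxy
    have h2 := hq_anti hf_meas hf_nonneg hm_int hl hx.le hxy
    have h3 := hq_lb hf_meas hf_nonneg hm_int hm_def hl (hx.le.trans hxy)
    have h4 : 0 < 1 - rhoBar f lam y := hs.trans_le h3
    have h5 : 0 ≤ ∫ t in Set.Ioi (0:ℝ), (min t y) ^ 2 * f t :=
      setIntegral_nonneg measurableSet_Ioi fun t _ => mul_nonneg (sq_nonneg _) (hf_nonneg t)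
    gcongr
  have hmeas : AEMeasurable (WbarFB f lam) (volume.restrict (Set.Ioi 0)) :=
    aemeasurable_restrict_of_monotoneOn measurableSet_Ioi hmono
  refine Integrable.mono' (hm_int.const_mul (lam * m / (2 * (1 - lam * m)^2)))
    (hmeas.mul hf_meas.aemeasurable).aestronglyMeasurable ?_
  filter_upwards [ae_restrict_mem measurableSet_Ioi] with x hx
  have hx : 0 < x := hx
  rw [Real.norm_of_nonneg (mul_nonneg (hq_W_nonneg hf_nonneg hl x) (hf_nonneg x)), ← mul_assoc]
  refine mul_le_mul_of_nonneg_right ?_ (hf_nonneg x)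
  have h1 := hp_minsq_le hf_meas hf_nonneg hm_int hx.le
  rw [← hm_def] at h1
  have h3 := hq_lb hf_meas hf_nonneg hm_int hm_def hl hx.le
  have h5 : 0 ≤ ∫ t in Set.Ioi (0:ℝ), (min t x) ^ 2 * f t :=
      setIntegral_nonneg measurableSet_Ioi fun t _ => mul_nonneg (sq_nonneg _) (hf_nonneg t)
  unfold WbarFB
  calc _ ≤ lam * (x * m) / (2 * (1 - lam * m)^2) := by gcongr; exact mul_nonneg hl.le (h5.trans h1)
    _ = _ := by ring

theorem hq_R_nonneg (hf_meas : Measurable f) (hf_nonneg : ∀ x, 0 ≤ f x)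
    (hm_int : IntegrableOn (fun t => t * f t) (Set.Ioi 0))
    (hm_def : m = ∫ t in Set.Ioi (0:ℝ), t * f t) (hl : 0 < lam) (hs : 0 < 1 - lam * m)
    {x : ℝ} (hx : 0 ≤ x) : 0 ≤ RbarFB f lam x :=
  div_nonneg hx (hs.le.trans (hq_lb hf_meas hf_nonneg hm_int hm_def hl hx))

theorem hq_R_le (hf_meas : Measurable f) (hf_nonneg : ∀ x, 0 ≤ f x)
    (hm_int : IntegrableOn (fun t => t * f t) (Set.Ioi 0))
    (hm_def : m = ∫ t in Set.Ioi (0:ℝ), t * f t) (hl : 0 < lam) (hs : 0 < 1 - lam * m)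
    {x : ℝ} (hx : 0 ≤ x) : RbarFB f lam x ≤ (1 - lam * m)⁻¹ * x := by
  have := hq_lb hf_meas hf_nonneg hm_int hm_def hl hx
  rw [mul_comm, ← div_eq_mul_inv]
  unfold RbarFB
  gcongr

theorem hq_R_int (hf_meas : Measurable f) (hf_nonneg : ∀ x, 0 ≤ f x)
    (hm_int : IntegrableOn (fun t => t * f t) (Set.Ioi 0))
    (hm_def : m = ∫ t in Set.Ioi (0:ℝ), t * f t) (hl : 0 < lam) (hs : 0 < 1 - lam * m) :
    IntegrableOn (fun x => RbarFB f lam x * f x) (Set.Ioi 0) := by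
  have hanti : AntitoneOn (fun x => 1 - rhoBar f lam x) (Set.Ioi 0) := by
    intro x hx y hy hxy
    exact hq_anti hf_meas hf_nonneg hm_int hl (le_of_lt hx) hxy
  have hmeas : AEMeasurable (fun x => 1 - rhoBar f lam x) (volume.restrict (Set.Ioi 0)) :=
    aemeasurable_restrict_of_antitoneOn measurableSet_Ioi hanti
  refine Integrable.mono' (hm_int.const_mul (1 - lam * m)⁻¹)
    ((measurable_id.aemeasurable.div hmeas).mul hf_meas.aemeasurable).aestronglyMeasurable ?_
  filter_upwards [ae_restrict_mem measurableSet_Ioi] with x hx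
  have hx : 0 < x := hx
  rw [Real.norm_of_nonneg (mul_nonneg (hq_R_nonneg hf_meas hf_nonneg hm_int hm_def hl hs hx.le)
    (hf_nonneg x)), ← mul_assoc]
  exact mul_le_mul_of_nonneg_right (hq_R_le hf_meas hf_nonneg hm_int hm_def hl hs hx.le)
    (hf_nonneg x)

theorem hq_EW_ge (hf_meas : Measurable f) (hf_nonneg : ∀ x, 0 ≤ f x)
    (hfi : IntegrableOn f (Set.Ioi 0))
    (hm_int : IntegrableOn (fun t => t * f t) (Set.Ioi 0))
    (hm_def : m = ∫ t in Set.Ioi (0:ℝ), t * f t) (hl : 0 < lam) (hs : 0 < 1 - lam * m)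
    (hT : 0 ≤ tailS f 1) {y : ℝ} (hy : 1 ≤ y) :
    (lam * tailS f 1 / 2) / (1 - rhoBar f lam y)^2 * tailS f y
      ≤ ∫ x in Set.Ioi (0:ℝ), WbarFB f lam x * f x := by
  have hsub : Set.Ioi y ⊆ Set.Ioi 0 := Set.Ioi_subset_Ioi (by linarith)
  have i := hq_W_int hf_meas hf_nonneg hm_int hm_def hl hs
  refine le_trans ?_ (setIntegral_mono_set i
    (Eventually.of_forall fun t => mul_nonneg (hq_W_nonneg hf_nonneg hl t) (hf_nonneg t))
    hsub.eventuallyLE)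
  rw [tailS.eq_1 f y, ← integral_const_mul]
  refine setIntegral_mono_on ((hfi.mono_set hsub).const_mul _) (i.mono_set hsub)
    measurableSet_Ioi ?_
  intro x hx
  have hx : y < x := hx
  refine mul_le_mul_of_nonneg_right ?_ (hf_nonneg x)
  refine le_trans ?_ (hq_W_ge hf_meas hf_nonneg hfi hm_int hl (hy.trans hx.le))
  have h2 := hq_anti hf_meas hf_nonneg hm_int hl (by linarith : 0 ≤ y) hx.le
  have h3 := hs.trans_le (hq_lb hf_meas hf_nonneg hm_int hm_def hl (by linarith : 0 ≤ x))
  gcongr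

end helpers2

section helpers3
variable {f : ℝ → ℝ} {m : ℝ}

theorem hr_basic (hm_pos : 0 < m) :
    ∀ᶠ lam in nhdsWithin (1/m) (Set.Iio (1/m)),
      0 < lam ∧ 1 / (2 * m) ≤ lam ∧ lam ≤ 1 / m ∧ 0 < 1 - lam * m := by
  have h1 : ∀ᶠ lam in nhdsWithin (1/m) (Set.Iio (1/m)), 1/(2*m) < lam :=
    mem_nhdsWithin_of_mem_nhds (Ioi_mem_nhds (by
      apply one_div_lt_one_div_of_lt hm_pos; linarith))
  filter_upwards [h1, self_mem_nhdsWithin] with lam h2 h3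
  have h3 : lam < 1/m := h3
  refine ⟨lt_trans (by positivity) h2, h2.le, h3.le, ?_⟩
  rw [lt_div_iff₀ hm_pos] at h3
  linarith

theorem hr_s (hm_pos : 0 < m) {e : ℝ} (he : 0 < e) :
    ∀ᶠ lam in nhdsWithin (1/m) (Set.Iio (1/m)), 1 - lam * m ≤ e := by
  have h : Tendsto (fun lam : ℝ => 1 - lam * m) (nhds (1/m)) (nhds (1 - 1/m*m)) :=
    (continuous_const.sub (continuous_id.mul continuous_const)).tendsto _
  rw [one_div_mul_cancel hm_pos.ne', sub_self] at h
  exact (h.mono_left nhdsWithin_le_nhds).eventually (ge_mem_nhds he)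

theorem hr_W_large (hf_meas : Measurable f) (hf_nonneg : ∀ x, 0 ≤ f x)
    (hfi : IntegrableOn f (Set.Ioi 0))
    (hm_int : IntegrableOn (fun t => t * f t) (Set.Ioi 0))
    (hm_def : m = ∫ t in Set.Ioi (0:ℝ), t * f t) (hm_pos : 0 < m)
    (hunbounded : ∀ x > (0:ℝ), 0 < tailS f x)
    {C ε x₀ : ℝ} (hC : 0 < C) (hε : 0 < ε) (hx₀ : 0 < x₀)
    (H : ∀ x ≥ x₀, ∀ γ ≥ (1:ℝ), tailS f (γ * x) ≤ C * γ ^ (-(2 + ε)) * tailS f x)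
    {M : ℝ} (hM : 0 < M) :
    ∀ᶠ lam in nhdsWithin (1/m) (Set.Iio (1/m)),
      M ≤ ∫ x in Set.Ioi (0:ℝ), WbarFB f lam x * f x := by
  have hT1 := hunbounded 1 one_pos
  obtain ⟨b, hb⟩ : ∃ b, b = tailS f 1 / (4 * m) := ⟨_, rfl⟩
  have hbpos : 0 < b := by rw [hb]; positivity
  obtain ⟨D, hD⟩ : ∃ D, D = 1 + 4 * C / m := ⟨_, rfl⟩
  have hDpos : 0 < D := by rw [hD]; positivity
  have hsm := (hp_sq_tail hf_nonneg hε hx₀ H).eventually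
    (ge_mem_nhds (show 0 < b / (D^2 * M) by positivity))
  obtain ⟨X, hX, hX1, hXx⟩ := (hsm.and ((eventually_ge_atTop 1).and
    (eventually_ge_atTop x₀))).exists
  have hX0 : 0 < X := by linarith
  have hTX := hunbounded X hX0
  filter_upwards [hr_basic hm_pos, hr_s hm_pos (mul_pos hX0 hTX)] with lam ⟨hl, hl1, hl2, hs⟩ hsX
  refine le_trans ?_ (hq_EW_ge hf_meas hf_nonneg hfi hm_int hm_def hl hs hT1.le hX1)
  have hub := hq_ub hf_meas hf_nonneg hm_int hm_def hl hX0.le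
  have hpos := hs.trans_le (hq_lb hf_meas hf_nonneg hm_int hm_def hl hX0.le)
  have hG := hp_G_le hf_nonneg hfi hm_int hC hε hx₀ H hXx
  have hh : 1 - rhoBar f lam X ≤ D * (X * tailS f X) := by
    have : lam * Gt f X ≤ 1/m * (4 * C * (X * tailS f X)) :=
      (mul_le_mul_of_nonneg_left hG hl.le).trans
        (mul_le_mul_of_nonneg_right hl2 (by positivity))
    have e : D * (X * tailS f X) = X * tailS f X + 1/m * (4 * C * (X * tailS f X)) := by
      rw [hD]; ring
    linarith
  have hbl : b ≤ lam * tailS f 1 / 2 := by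
    have := mul_le_mul_of_nonneg_right hl1 hT1.le
    calc b = 1 / (2 * m) * tailS f 1 / 2 := by rw [hb]; field_simp; norm_num
      _ ≤ _ := by linarith
  calc M ≤ b / (D * (X * tailS f X))^2 * tailS f X := by
        rw [le_div_iff₀ (by positivity)] at hX
        rw [div_mul_eq_mul_div, le_div_iff₀ (by positivity)]
        have := mul_le_mul_of_nonneg_right hX hTX.le
        linarith
    _ ≤ _ := by gcongr

theorem hr_R_small (hf_meas : Measurable f) (hf_nonneg : ∀ x, 0 ≤ f x)
    (hfi : IntegrableOn f (Set.Ioi 0)) (hf_prob : ∫ t in Set.Ioi (0:ℝ), f t = 1)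
    (hm_int : IntegrableOn (fun t => t * f t) (Set.Ioi 0))
    (hm_def : m = ∫ t in Set.Ioi (0:ℝ), t * f t) (hm_pos : 0 < m)
    (hunbounded : ∀ x > (0:ℝ), 0 < tailS f x)
    {C ε x₀ : ℝ} (hC : 0 < C) (hε : 0 < ε) (hx₀ : 0 < x₀)
    (H : ∀ x ≥ x₀, ∀ γ ≥ (1:ℝ), tailS f (γ * x) ≤ C * γ ^ (-(2 + ε)) * tailS f x)
    {b : ℝ} (hb : b = tailS f 1 / (4 * m))
    {δ : ℝ} (hδ : 0 < δ) :
    ∀ᶠ lam in nhdsWithin (1/m) (Set.Iio (1/m)),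
      ∫ x in Set.Ioi (0:ℝ), RbarFB f lam x * f x ≤
        δ * (2 / b + 16 * C / b + 1) * ∫ x in Set.Ioi (0:ℝ), WbarFB f lam x * f x := by
  have hT1 := hunbounded 1 one_pos
  have hbpos : 0 < b := by rw [hb]; positivity
  have hev := (hp_xG hf_nonneg hfi hm_int hC hε hx₀ H).eventually
    (ge_mem_nhds (show 0 < δ * m by positivity))
  obtain ⟨X', hX'⟩ := eventually_atTop.1 hev
  obtain ⟨X, hXX, hX1, hXx⟩ : ∃ X, X' ≤ X ∧ 1 ≤ X ∧ x₀ ≤ X :=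
    ⟨max X' (max 1 x₀), le_max_left _ _, (le_max_left _ _).trans (le_max_right _ _),
      (le_max_right _ _).trans (le_max_right _ _)⟩
  have hX : ∀ x ≥ X, x * Gt f x ≤ δ * m := fun x hx => hX' x (hXX.trans hx)
  have hX0 : 0 < X := by linarith
  obtain ⟨c, hc⟩ : ∃ c, c = 1 - 1/m * ∫ t in Set.Ioi (0:ℝ), min t X * f t := ⟨_, rfl⟩
  have hmin := hp_min_lt hf_meas hf_nonneg hfi hm_int hunbounded hX0
  rw [← hm_def] at hmin
  have hcpos : 0 < c := by
    rw [hc, one_div_mul_eq_div, sub_pos, div_lt_one hm_pos]; exact hmin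
  have hmin0 : 0 ≤ ∫ t in Set.Ioi (0:ℝ), min t X * f t :=
    setIntegral_nonneg measurableSet_Ioi fun t ht =>
      mul_nonneg (le_min (le_of_lt ht) hX0.le) (hf_nonneg t)
  filter_upwards [hr_basic hm_pos, hr_s hm_pos (div_pos hδ hX0),
    hr_W_large hf_meas hf_nonneg hfi hm_int hm_def hm_pos hunbounded hC hε hx₀ H
      (show 0 < X / c / δ by positivity)] with lam ⟨hl, hl1, hl2, hs⟩ hsX hWM
  obtain ⟨s, hs_def⟩ : ∃ s, s = 1 - lam * m := ⟨_, rfl⟩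
  rw [← hs_def] at hsX
  have hspos : 0 < s := hs_def ▸ hs
  obtain ⟨y, hy_def⟩ : ∃ y, y = δ / s := ⟨_, rfl⟩
  have hys : y * s = δ := by rw [hy_def]; field_simp
  have hXy : X ≤ y := by
    rw [hy_def, le_div_iff₀ hspos]; rw [le_div_iff₀ hX0] at hsX; linarith
  have hy0 : 0 < y := hX0.trans_le hXy
  have hbl : b ≤ lam * tailS f 1 / 2 := by
    have := mul_le_mul_of_nonneg_right hl1 hT1.le
    calc b = 1 / (2 * m) * tailS f 1 / 2 := by rw [hb]; field_simp; norm_num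
      _ ≤ _ := by linarith
  have hpos : ∀ x, 0 ≤ x → 0 < 1 - rhoBar f lam x := fun x hx =>
    hs.trans_le (hq_lb hf_meas hf_nonneg hm_int hm_def hl hx)
  -- upper bound on x * h
  have hxh : ∀ x ≥ X, x * (1 - rhoBar f lam x) ≤ x * s + δ := by
    intro x hx
    have hx0 : 0 < x := hX0.trans_le hx
    have h1 := hq_ub hf_meas hf_nonneg hm_int hm_def hl hx0.le
    rw [← hs_def] at h1
    have h2 : lam * (x * Gt f x) ≤ lam * (δ * m) := mul_le_mul_of_nonneg_left (hX x hx) hl.le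
    have h3 : lam * m ≤ 1 := by linarith
    nlinarith [mul_le_mul_of_nonneg_left h1 hx0.le, mul_le_mul_of_nonneg_left h3 hδ.le]
  have iW := hq_W_int hf_meas hf_nonneg hm_int hm_def hl hs
  have iR := hq_R_int hf_meas hf_nonneg hm_int hm_def hl hs
  have iG : IntegrableOn (fun x => s⁻¹ * (Set.Ioi y).indicator (fun t => t * f t) x) (Set.Ioi 0) :=
    (hm_int.indicator measurableSet_Ioi).const_mul _
  have eG : ∫ x in Set.Ioi (0:ℝ), s⁻¹ * (Set.Ioi y).indicator (fun t => t * f t) x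
      = s⁻¹ * Gt f y := by
    rw [integral_const_mul, setIntegral_indicator measurableSet_Ioi,
      Set.inter_eq_self_of_subset_right (Set.Ioi_subset_Ioi hy0.le)]; rfl
  have hpt : ∀ x ∈ Set.Ioi (0:ℝ), RbarFB f lam x * f x ≤
      X / c * f x + 2 * δ / b * (WbarFB f lam x * f x)
        + s⁻¹ * (Set.Ioi y).indicator (fun t => t * f t) x := by
    intro x hx
    have hx : 0 < x := hx
    have hW := hq_W_nonneg hf_nonneg hl x
    have t1 : 0 ≤ X / c * f x := mul_nonneg (by positivity) (hf_nonneg x)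
    have t2 : 0 ≤ 2 * δ / b * (WbarFB f lam x * f x) :=
      mul_nonneg (by positivity) (mul_nonneg hW (hf_nonneg x))
    have t3 : 0 ≤ s⁻¹ * (Set.Ioi y).indicator (fun t => t * f t) x :=
      mul_nonneg (by positivity) (Set.indicator_nonneg (fun t ht =>
        mul_nonneg (hy0.le.trans (le_of_lt ht)) (hf_nonneg t)) x)
    by_cases h1 : x ≤ X
    · have : RbarFB f lam x ≤ X / c := by
        have a1 := hq_anti hf_meas hf_nonneg hm_int hl hx.le h1
        have a2 : c ≤ 1 - rhoBar f lam X := by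
          rw [hc]; unfold rhoBar
          have := mul_le_mul_of_nonneg_right hl2 hmin0
          linarith
        unfold RbarFB
        exact div_le_div₀ hX0.le h1 hcpos (a2.trans a1)
      have := mul_le_mul_of_nonneg_right this (hf_nonneg x)
      linarith
    · push Not at h1
      by_cases h2 : x ≤ y
      · have a1 := hxh x h1.le
        have a2 : x * s ≤ δ := by rw [← hys]; gcongr
        have hp := hpos x hx.le
        have a3 := hq_W_ge hf_meas hf_nonneg hfi hm_int hl (hX1.trans h1.le)
        have a4 : b / (1 - rhoBar f lam x)^2 ≤ WbarFB f lam x := le_trans (by gcongr) a3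
        have : RbarFB f lam x ≤ 2 * δ / b * WbarFB f lam x := by
          calc RbarFB f lam x ≤ 2 * δ / b * (b / (1 - rhoBar f lam x)^2) := by
                unfold RbarFB
                rw [div_mul_div_cancel₀ hbpos.ne', div_le_div_iff₀ hp (by positivity)]
                nlinarith [mul_le_mul_of_nonneg_right (show x * (1 - rhoBar f lam x) ≤ 2 * δ by linarith) hp.le]
            _ ≤ _ := by gcongr
        have := mul_le_mul_of_nonneg_right this (hf_nonneg x)
        linarith
      · push Not at h2
        have a := mul_le_mul_of_nonneg_right
          (hq_R_le hf_meas hf_nonneg hm_int hm_def hl hs hx.le) (hf_nonneg x)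
        rw [← hs_def] at a
        rw [Set.indicator_of_mem (show x ∈ Set.Ioi y from h2)]
        linarith
  have hint := setIntegral_mono_on iR (((hfi.const_mul (X/c)).add
    (iW.const_mul (2*δ/b))).add iG) measurableSet_Ioi hpt
  simp only [Pi.add_apply] at hint
  have i12 : IntegrableOn (fun x => X / c * f x + 2 * δ / b * (WbarFB f lam x * f x))
      (Set.Ioi 0) := (hfi.const_mul (X/c)).add (iW.const_mul (2*δ/b))
  rw [integral_add i12 iG,
    integral_add (hfi.const_mul (X/c)) (iW.const_mul (2*δ/b)), eG, integral_const_mul,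
    integral_const_mul, hf_prob, mul_one] at hint
  obtain ⟨E, hE⟩ : ∃ E, E = ∫ x in Set.Ioi (0:ℝ), WbarFB f lam x * f x := ⟨_, rfl⟩
  rw [← hE] at hint hWM ⊢
  have p1 : X / c ≤ δ * E := by
    rw [div_le_iff₀ hδ] at hWM; linarith
  have p3 : s⁻¹ * Gt f y ≤ 16 * C / b * δ * E := by
    have hG := hp_G_le hf_nonneg hfi hm_int hC hε hx₀ H (hXx.trans hXy)
    have hTy := hunbounded y hy0
    have hh : 1 - rhoBar f lam y ≤ 2 * s := by
      have := hxh y hXy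
      have : y * (1 - rhoBar f lam y) ≤ y * (2 * s) := by linarith
      exact le_of_mul_le_mul_left this hy0
    have hp := hpos y hy0.le
    have hEW := hq_EW_ge hf_meas hf_nonneg hfi hm_int hm_def hl hs hT1.le (hX1.trans hXy)
    rw [← hE] at hEW
    have q : b / (2 * s)^2 * tailS f y ≤ E := le_trans (by gcongr) hEW
    calc s⁻¹ * Gt f y ≤ s⁻¹ * (4 * C * (y * tailS f y)) := by gcongr
      _ = 16 * C / b * δ * (b / (2 * s)^2 * tailS f y) := by
        rw [hy_def]; field_simp; ring
      _ ≤ _ := by gcongr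
  calc _ ≤ _ := hint
    _ ≤ δ * E + 2 * δ / b * E + 16 * C / b * δ * E := by linarith
    _ = _ := by ring

end helpers3

/-- **Theorem 6.12.** Fix an integer `k ≥ 1`. If `S` is unbounded with tail
of upper Matuszewska index less than `−2` (Potter-type bound), then the
paper's explicit upper bound on the `k`-server FB mean response time is
asymptotically tight against the single-server FB mean response time:
`lim_{λ → (1/m)⁻} (∫₀^∞ (W̄_λ(x) + (2k−1) R̄_λ(x)) f(x) dx) / T̄^FB(λ) = 1`. -/
theorem fbk_ratio_tendsto_one
    (f : ℝ → ℝ) (m : ℝ) (k : ℕ) (hk : 1 ≤ k)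
    (hf_meas : Measurable f)
    (hf_nonneg : ∀ x, 0 ≤ f x)
    (hf_zero : ∀ x ≤ 0, f x = 0)
    (hf_prob : ∫ t in Set.Ioi (0:ℝ), f t = 1)
    (hm_int : Integrable (fun t => t * f t) (volume.restrict (Set.Ioi 0)))
    (hm_def : m = ∫ t in Set.Ioi (0:ℝ), t * f t)
    (hm_pos : 0 < m)
    (hunbounded : ∀ x > (0:ℝ), 0 < tailS f x)
    (hmatuszewska : ∃ C > (0:ℝ), ∃ ε > (0:ℝ), ∃ x₀ > (0:ℝ),
      ∀ x ≥ x₀, ∀ γ ≥ (1:ℝ), tailS f (γ * x) ≤ C * γ ^ (-(2 + ε)) * tailS f x) :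
    Tendsto (fun lam =>
        (∫ x in Set.Ioi (0:ℝ),
          (WbarFB f lam x + (2 * (k : ℝ) - 1) * RbarFB f lam x) * f x)
          / TfbMean f lam)
      (nhdsWithin (1/m) (Set.Iio (1/m))) (nhds 1) := by
  have hfi := hp_intf hf_prob
  obtain ⟨C, hC, ε, hε, x₀, hx₀, H⟩ := hmatuszewska
  have hm_int' : IntegrableOn (fun t => t * f t) (Set.Ioi 0) := hm_int
  have hT1 := hunbounded 1 one_pos
  obtain ⟨b, hb⟩ : ∃ b, b = tailS f 1 / (4 * m) := ⟨_, rfl⟩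
  have hbpos : 0 < b := by rw [hb]; positivity
  have hk' : (1:ℝ) ≤ k := by exact_mod_cast hk
  rw [Metric.tendsto_nhds]
  intro η hη
  obtain ⟨A, hA⟩ : ∃ A, A = (2 / b + 16 * C / b + 1) * (2 * k) := ⟨_, rfl⟩
  have hApos : 0 < A := by rw [hA]; positivity
  filter_upwards [hr_basic hm_pos,
    hr_W_large hf_meas hf_nonneg hfi hm_int' hm_def hm_pos hunbounded hC hε hx₀ H one_pos,
    hr_R_small hf_meas hf_nonneg hfi hf_prob hm_int' hm_def hm_pos hunbounded hC hε hx₀ H hb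
      (show 0 < η / (2 * A) by positivity)] with lam ⟨hl, hl1, hl2, hs⟩ hW hR
  have iW := hq_W_int hf_meas hf_nonneg hm_int' hm_def hl hs
  have iR := hq_R_int hf_meas hf_nonneg hm_int' hm_def hl hs
  have hR0 : 0 ≤ ∫ x in Set.Ioi (0:ℝ), RbarFB f lam x * f x :=
    setIntegral_nonneg measurableSet_Ioi fun x hx =>
      mul_nonneg (hq_R_nonneg hf_meas hf_nonneg hm_int' hm_def hl hs (le_of_lt hx)) (hf_nonneg x)
  have e : ∀ c : ℝ, ∫ x in Set.Ioi (0:ℝ), (WbarFB f lam x + c * RbarFB f lam x) * f x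
      = (∫ x in Set.Ioi (0:ℝ), WbarFB f lam x * f x)
        + c * ∫ x in Set.Ioi (0:ℝ), RbarFB f lam x * f x := by
    intro c
    rw [← integral_const_mul, ← integral_add iW (iR.const_mul c)]
    congr 1; ext x; ring
  have e1 := e 1
  simp only [one_mul] at e1
  rw [TfbMean, e, e1, Real.dist_eq]
  generalize (∫ x in Set.Ioi (0:ℝ), WbarFB f lam x * f x) = W at *
  generalize (∫ x in Set.Ioi (0:ℝ), RbarFB f lam x * f x) = R at *
  have hWR : 0 < W + R := by linarith
  have e2 : (W + (2 * (k:ℝ) - 1) * R) / (W + R) - 1 = (2 * k - 2) * R / (W + R) := by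
    field_simp; ring
  rw [e2, abs_of_nonneg (div_nonneg (mul_nonneg (by linarith) hR0) hWR.le), div_lt_iff₀ hWR]
  have h1 : (2 * (k:ℝ) - 2) * R ≤ 2 * k * R := by nlinarith
  have h2 : 2 * k * R ≤ η / 2 * W := by
    calc 2 * k * R ≤ 2 * k * (η / (2 * A) * (2 / b + 16 * C / b + 1) * W) := by gcongr
      _ = η / (2 * A) * A * W := by rw [hA]; ring
      _ = _ := by field_simp
  have h3 : 0 < η * W := by positivity
  have h4 : 0 ≤ η * R := by positivity
  linarith
end
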